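/- arXiv:1806.01838 — 7 statements merged into one kernel-verified Lean document; each statement's English description precedes it below -/
import Mathlib

section
/- Suppose A ∈ ℝ[x] is an even polynomial with deg(A) ≤ 2k such that A(x) ≥ 0 for all x ∈ [−1,1]. Then there exist polynomials B, C ∈ ℝ[x] such that A(x) = B(x)² + (1−x²)·C(x)², with deg(B) ≤ k, deg(C) ≤ k−1, B of parity (k mod 2) and C of parity (k−1 mod 2). -/
/-!
Writing `A(x) = P(x²)`, the polynomial `P` has degree at most `k` and is nonnegative on `[0, 1]`.
The pairs `(B, C)` behave like elements `B + sC` with `s² = -(1 - x²)`, and `B² + (1 - x²)C²` is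
their norm; so the representable polynomials are closed under multiplication, the index `k` (which
controls degrees and parities) being additive (`SquareRep.mul`). It therefore suffices to factor `P`
into pieces that are nonnegative on `[0, 1]` and treat each piece:

* a linear factor `a + b y` nonnegative at `0` and `1` equals `(a + b) y + a (1 - y)`
  (`squareRep_linear`);
* a double root in `(0, 1)` gives the square `(y - r)²`;
* a pair of nonreal roots gives `(y - a)² + b²`, which has the form
  `(α y - ρ)² + (α² - 1) y (1 - y)` (`squareRep_quadratic`).

The factorization is an induction on the degree of `P` (`squareRep_expand`): a root in `(0, 1)` must
be a double one as `P` does not change sign there. Finally `1 = x² + (1 - x²)` has index `1`, which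
allows the index to exceed the degree of `P`.
-/

open Polynomial

/-- A real polynomial has parity `k mod 2`: coefficients of opposite parity vanish. -/
def HasParityR (k : ℕ) (P : Polynomial ℝ) : Prop :=
  ∀ j, j % 2 ≠ k % 2 → P.coeff j = 0

/-- `A = B² + (1 - x²) C²` with `deg B ≤ k`, `deg C < k`, and `B`, `C` of parity `k`, `k + 1`. -/
def SquareRep (k : ℕ) (A : ℝ[X]) : Prop :=
  ∃ B C : ℝ[X], A = B ^ 2 + (1 - X ^ 2) * C ^ 2 ∧
    B.degree ≤ (k : WithBot ℕ) ∧ C.degree < (k : WithBot ℕ) ∧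
    HasParityR k B ∧ HasParityR (k + 1) C

lemma HasParityR.mul {k l : ℕ} {P Q : ℝ[X]} (hP : HasParityR k P) (hQ : HasParityR l Q) :
    HasParityR (k + l) (P * Q) := by
  intro j hj
  rw [coeff_mul]
  refine Finset.sum_eq_zero fun ij hij => ?_
  rw [Finset.HasAntidiagonal.mem_antidiagonal] at hij
  by_cases h : ij.1 % 2 = k % 2
  · rw [hQ ij.2 (by omega), mul_zero]
  · rw [hP ij.1 h, zero_mul]

lemma HasParityR.add {k : ℕ} {P Q : ℝ[X]} (hP : HasParityR k P) (hQ : HasParityR k Q) :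
    HasParityR k (P + Q) := fun j hj => by rw [coeff_add, hP j hj, hQ j hj, add_zero]

lemma HasParityR.sub {k : ℕ} {P Q : ℝ[X]} (hP : HasParityR k P) (hQ : HasParityR k Q) :
    HasParityR k (P - Q) := fun j hj => by rw [coeff_sub, hP j hj, hQ j hj, sub_zero]

lemma HasParityR.congr {k l : ℕ} {P : ℝ[X]} (hP : HasParityR k P) (h : k % 2 = l % 2) :
    HasParityR l P := fun j hj => hP j (by omega)

lemma hasParityR_zero (k : ℕ) : HasParityR k 0 := fun _ _ => coeff_zero _

lemma hasParityR_C (a : ℝ) : HasParityR 0 (C a) := fun j hj => by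
  rw [coeff_C, if_neg (by omega)]

lemma hasParityR_X : HasParityR 1 (X : ℝ[X]) := fun j hj => by
  rw [coeff_X, if_neg (by omega)]

lemma degree_mul_lt_of_le_of_lt {k l : ℕ} {P Q : ℝ[X]} (hP : P.degree ≤ (k : WithBot ℕ))
    (hQ : Q.degree < (l : WithBot ℕ)) : (P * Q).degree < ((k + l : ℕ) : WithBot ℕ) := by
  by_cases h : P = 0
  · simp [h, bot_lt_iff_ne_bot]
  by_cases h' : Q = 0
  · simp [h', bot_lt_iff_ne_bot]
  rw [← natDegree_lt_iff_degree_lt (mul_ne_zero h h'), natDegree_mul h h']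
  rw [← natDegree_le_iff_degree_le] at hP
  rw [← natDegree_lt_iff_degree_lt h'] at hQ
  omega

lemma degree_sq_mul_le {k l : ℕ} {P Q : ℝ[X]} (hP : P.degree < (k : WithBot ℕ))
    (hQ : Q.degree < (l : WithBot ℕ)) :
    ((1 - X ^ 2) * (P * Q)).degree ≤ ((k + l : ℕ) : WithBot ℕ) := by
  by_cases h : P = 0
  · simp [h]
  by_cases h' : Q = 0
  · simp [h']
  rw [← natDegree_le_iff_degree_le]
  rw [← natDegree_lt_iff_degree_lt h] at hP
  rw [← natDegree_lt_iff_degree_lt h'] at hQ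
  have h1 : (1 - X ^ 2 : ℝ[X]).natDegree ≤ 2 := by compute_degree
  have h2 := natDegree_mul_le (p := (1 - X ^ 2 : ℝ[X])) (q := P * Q)
  have h3 := natDegree_mul_le (p := P) (q := Q)
  omega

/-- Multiplicativity of the norm form: `(B₁ + sC₁)(B₂ + sC₂)` with `s² = -(1 - x²)`. -/
lemma SquareRep.mul {k l : ℕ} {P Q : ℝ[X]} (hP : SquareRep k P) (hQ : SquareRep l Q) :
    SquareRep (k + l) (P * Q) := by
  obtain ⟨B, D, rfl, hB, hD, pB, pD⟩ := hP
  obtain ⟨B', D', rfl, hB', hD', pB', pD'⟩ := hQ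
  have p2 : HasParityR 0 (1 - X ^ 2 : ℝ[X]) := by
    have h := (hasParityR_X.mul hasParityR_X).congr (l := 0) rfl
    rw [← sq] at h
    exact (by simpa using hasParityR_C 1 : HasParityR 0 (1 : ℝ[X])).sub h
  refine ⟨B * B' - (1 - X ^ 2) * (D * D'), B * D' + D * B', by ring, ?_, ?_, ?_, ?_⟩
  · refine (degree_sub_le _ _).trans (max_le ?_ (degree_sq_mul_le hD hD'))
    refine (degree_mul_le _ _).trans ?_
    push_cast
    exact add_le_add hB hB'
  · refine (degree_add_le _ _).trans_lt (max_lt (degree_mul_lt_of_le_of_lt hB hD') ?_)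
    rw [mul_comm, add_comm]
    exact degree_mul_lt_of_le_of_lt hB' hD
  · exact (pB.mul pB').sub ((p2.mul (pD.mul pD')).congr (by omega))
  · exact ((pB.mul pD').congr (by omega)).add ((pD.mul pB').congr (by omega))

lemma squareRep_C {a : ℝ} (ha : 0 ≤ a) : SquareRep 0 (C a) := by
  refine ⟨C √a, 0, ?_, by simpa using degree_C_le, by simp, hasParityR_C _, hasParityR_zero _⟩
  rw [← C_pow, Real.sq_sqrt ha]
  simp

lemma squareRep_linear {a b : ℝ} (ha : 0 ≤ a) (hab : 0 ≤ a + b) :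
    SquareRep 1 (expand ℝ 2 (C a + C b * X)) := by
  refine ⟨C √(a + b) * X, C √a, ?_, ?_, ?_, ?_, (hasParityR_C _).congr rfl⟩
  · rw [mul_pow, ← C_pow, ← C_pow, Real.sq_sqrt ha, Real.sq_sqrt hab]
    simp only [map_add, map_mul, expand_C, expand_X]
    ring
  · exact degree_C_mul_X_le _
  · exact degree_C_le.trans_lt (by norm_num)
  · exact ((hasParityR_C _).mul hasParityR_X).congr rfl

lemma squareRep_one (k : ℕ) : SquareRep k 1 := by
  induction k with
  | zero => simpa using squareRep_C zero_le_one
  | succ k ih =>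
    have h := ih.mul (squareRep_linear (a := 1) (b := 0) (by norm_num) (by norm_num))
    simpa using h

lemma SquareRep.mono {k l : ℕ} {P : ℝ[X]} (hP : SquareRep k P) (h : k ≤ l) : SquareRep l P := by
  have := hP.mul (squareRep_one (l - k))
  rwa [mul_one, Nat.add_sub_cancel' h] at this

/-- With `ρ = |a + bi|` and `α = |a + bi| + |1 - a - bi| ≥ 1`, one has
`(y - a)² + b² = (α y - ρ)² + (α² - 1) y (1 - y)`. -/
lemma squareRep_quadratic (a b : ℝ) :
    SquareRep 2 (expand ℝ 2 ((X - C a) ^ 2 + C (b ^ 2))) := by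
  obtain ⟨ρ, hρ⟩ : ∃ ρ, ρ = √(a ^ 2 + b ^ 2) := ⟨_, rfl⟩
  obtain ⟨σ, hσ⟩ : ∃ σ, σ = √((1 - a) ^ 2 + b ^ 2) := ⟨_, rfl⟩
  have hρ2 : ρ ^ 2 = a ^ 2 + b ^ 2 := by rw [hρ, Real.sq_sqrt (by positivity)]
  have hσ2 : σ ^ 2 = (1 - a) ^ 2 + b ^ 2 := by rw [hσ, Real.sq_sqrt (by positivity)]
  have hρa : a ≤ ρ := hρ ▸ Real.le_sqrt_of_sq_le (by nlinarith)
  have hσa : 1 - a ≤ σ := hσ ▸ Real.le_sqrt_of_sq_le (by nlinarith)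
  obtain ⟨τ, hτ⟩ : ∃ τ, τ ^ 2 = (ρ + σ) ^ 2 - 1 := ⟨_, Real.sq_sqrt (by nlinarith)⟩
  have pX2 : HasParityR 0 (X ^ 2 : ℝ[X]) := by
    rw [sq]; exact (hasParityR_X.mul hasParityR_X).congr rfl
  refine ⟨C (ρ + σ) * X ^ 2 - C ρ, C τ * X, ?_, ?_, ?_, ?_, ?_⟩
  · refine Polynomial.funext fun x => ?_
    simp only [map_add, map_sub, map_pow, expand_C, expand_X, eval_add, eval_sub, eval_mul,
      eval_pow, eval_C, eval_X, eval_one]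
    rw [mul_pow, hτ]
    linear_combination (-1 + x ^ 2) * hρ2 - x ^ 2 * hσ2
  · compute_degree; norm_num
  · exact (degree_C_mul_X_le _).trans_lt (by norm_num)
  · exact ((((hasParityR_C _).mul pX2).sub (hasParityR_C _))).congr rfl
  · exact ((hasParityR_C _).mul hasParityR_X).congr rfl

lemma eval_nonneg_Icc {a b : ℝ} (hab : a < b) {Q : ℝ[X]}
    (h : ∀ x ∈ Set.Ioo a b, 0 ≤ Q.eval x) : ∀ x ∈ Set.Icc a b, 0 ≤ Q.eval x := by
  intro x hx
  rw [← closure_Ioo hab.ne] at hx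
  exact le_on_closure h continuousOn_const Q.continuous.continuousOn hx

/-- A factor positive on `(a, b)` may be cancelled from an inequality on `[a, b]`. -/
lemma eval_nonneg_of_mul {a b : ℝ} (hab : a < b) {F Q : ℝ[X]}
    (hF : ∀ x ∈ Set.Ioo a b, 0 < F.eval x)
    (h : ∀ x ∈ Set.Icc a b, 0 ≤ (F * Q).eval x) : ∀ x ∈ Set.Icc a b, 0 ≤ Q.eval x := by
  refine eval_nonneg_Icc hab fun x hx => ?_
  have := h x (Set.Ioo_subset_Icc_self hx)
  rw [eval_mul] at this
  exact nonneg_of_mul_nonneg_right this (hF x hx)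

lemma squareRep_expand (n : ℕ) : ∀ P : ℝ[X], P.natDegree ≤ n →
    (∀ x ∈ Set.Icc (0 : ℝ) 1, 0 ≤ P.eval x) → SquareRep n (expand ℝ 2 P) := by
  induction n using Nat.strong_induction_on with
  | _ n ih =>
  intro P hn hP
  by_cases hd : P.natDegree = 0
  · obtain ⟨c, rfl⟩ := natDegree_eq_zero.1 hd
    rw [expand_C]
    exact (squareRep_C (by simpa using hP 0 (by simp))).mono (Nat.zero_le _)
  have hP0 : P ≠ 0 := by rintro rfl; simp at hd
  -- Split off a factor `F` of degree `d`; the inductive hypothesis handles the cofactor.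
  have key : ∀ (d : ℕ) (F Q : ℝ[X]), 0 < d → P = F * Q → F.natDegree = d →
      SquareRep d (expand ℝ 2 F) → (∀ x ∈ Set.Icc (0 : ℝ) 1, 0 ≤ Q.eval x) →
      SquareRep n (expand ℝ 2 P) := by
    intro d F Q hd0 hFQ hF hrep hQ
    have hF0 : F ≠ 0 := by rintro rfl; simp [hP0] at hFQ
    have hQ0 : Q ≠ 0 := by rintro rfl; simp [hP0] at hFQ
    have hdeg : P.natDegree = d + Q.natDegree := by rw [hFQ, natDegree_mul hF0 hQ0, hF]
    have h := hrep.mul (ih (n - d) (by omega) Q (by omega) hQ)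
    rw [← map_mul, ← hFQ] at h
    exact h.mono (by omega)
  obtain ⟨z, hz⟩ := IsAlgClosed.exists_aeval_eq_zero ℂ P
    (fun h => hd (natDegree_eq_of_degree_eq_some h))
  by_cases him : z.im = 0
  · obtain ⟨r, rfl⟩ : ∃ r : ℝ, z = (r : ℂ) := ⟨z.re, by apply Complex.ext <;> simp [him]⟩
    have hr : P.IsRoot r := by
      have h := aeval_algebraMap_apply ℂ r P
      rw [Complex.coe_algebraMap, hz] at h
      rw [IsRoot, ← coe_aeval_eq_eval]
      exact (Complex.ofReal_eq_zero.1 h.symm)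
    obtain ⟨Q, hQ⟩ := dvd_iff_isRoot.2 hr
    rcases le_or_gt r 0 with h0 | h0
    · refine key 1 (X - C r) Q one_pos hQ (natDegree_X_sub_C r) ?_
        (eval_nonneg_of_mul one_pos (F := X - C r) ?_ (hQ ▸ hP))
      · have := squareRep_linear (a := -r) (b := 1) (by linarith) (by linarith)
        convert this using 2
        simp only [map_neg, map_one]; ring
      · intro x hx
        simp only [eval_sub, eval_X, eval_C]; linarith [hx.1]
    rcases le_or_gt 1 r with h1 | h1
    · have hQ' : P = (C r - X) * (-Q) := by rw [hQ]; ring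
      refine key 1 (C r - X) (-Q) one_pos hQ' ?_ ?_
        (eval_nonneg_of_mul one_pos (F := C r - X) ?_ (hQ' ▸ hP))
      · rw [← neg_sub, natDegree_neg, natDegree_X_sub_C]
      · have := squareRep_linear (a := r) (b := -1) (by linarith) (by linarith)
        convert this using 2
        simp only [map_neg, map_one]; ring
      · intro x hx
        simp only [eval_sub, eval_X, eval_C]; linarith [hx.2]
    -- `Q` is nonpositive to the left of `r` and nonnegative to the right, so it vanishes at `r`.
    · have hQ' : P = (C r - X) * (-Q) := by rw [hQ]; ring
      have hl : 0 ≤ (-Q).eval r := eval_nonneg_of_mul h0 (F := C r - X)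
        (fun x hx => by simp only [eval_sub, eval_X, eval_C]; linarith [hx.2])
        (fun x hx => hQ' ▸ hP x ⟨hx.1, hx.2.trans h1.le⟩) r ⟨h0.le, le_rfl⟩
      have hu : 0 ≤ Q.eval r := eval_nonneg_of_mul h1 (F := X - C r)
        (fun x hx => by simp only [eval_sub, eval_X, eval_C]; linarith [hx.1])
        (fun x hx => hQ ▸ hP x ⟨h0.le.trans hx.1, hx.2⟩) r ⟨le_rfl, h1.le⟩
      rw [eval_neg] at hl
      obtain ⟨R, hR⟩ := dvd_iff_isRoot.2 (show Q.IsRoot r from by rw [IsRoot]; linarith)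
      have hPR : P = (X - C r) ^ 2 * R := by rw [hQ, hR]; ring
      refine key 2 _ R two_pos hPR (by simp) (by simpa using squareRep_quadratic r 0) ?_
      intro x hx
      rcases le_total x r with hxr | hxr
      · exact eval_nonneg_of_mul h0 (F := (X - C r) ^ 2)
          (fun y hy => by
            simp only [eval_sub, eval_X, eval_C, eval_pow]; nlinarith [hy.2])
          (fun y hy => hPR ▸ hP y ⟨hy.1, hy.2.trans h1.le⟩) x ⟨hx.1, hxr⟩
      · exact eval_nonneg_of_mul h1 (F := (X - C r) ^ 2)
          (fun y hy => by
            simp only [eval_sub, eval_X, eval_C, eval_pow]; nlinarith [hy.1])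
          (fun y hy => hPR ▸ hP y ⟨h0.le.trans hy.1, hy.2⟩) x ⟨hxr, hx.2⟩
  · obtain ⟨Q, hQ⟩ := quadratic_dvd_of_aeval_eq_zero_im_ne_zero P hz him
    have hF : (X ^ 2 - C (2 * z.re) * X + C (‖z‖ ^ 2) : ℝ[X]) =
        (X - C z.re) ^ 2 + C (z.im ^ 2) := by
      rw [Complex.sq_norm, Complex.normSq_apply]
      simp only [map_add, map_mul, map_pow, map_ofNat]
      ring
    rw [hF] at hQ
    refine key 2 _ Q two_pos hQ ?_ (squareRep_quadratic _ _)
      (eval_nonneg_of_mul one_pos (F := (X - C z.re) ^ 2 + C (z.im ^ 2)) ?_ (hQ ▸ hP))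
    · rw [natDegree_add_C]; simp
    · intro x _
      simp only [eval_add, eval_sub, eval_X, eval_C, eval_pow]
      positivity

theorem sum_of_squares_decomposition (k : ℕ) (A : Polynomial ℝ)
    (hEven : ∀ j, j % 2 = 1 → A.coeff j = 0)
    (hdeg : A.degree ≤ ((2 * k : ℕ) : WithBot ℕ))
    (hpos : ∀ x : ℝ, x ∈ Set.Icc (-1 : ℝ) 1 → 0 ≤ A.eval x) :
    ∃ B C : Polynomial ℝ,
      A = B ^ 2 + (1 - Polynomial.X ^ 2) * C ^ 2 ∧
      B.degree ≤ (k : WithBot ℕ) ∧ C.degree < (k : WithBot ℕ) ∧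
      HasParityR k B ∧ HasParityR (k + 1) C := by
  have hA : expand ℝ 2 (contract 2 A) = A := by
    ext j
    rw [coeff_expand two_pos]
    split_ifs with h
    · rw [coeff_contract two_ne_zero, Nat.div_mul_cancel h]
    · exact (hEven j (by omega)).symm
  have hd : (contract 2 A).natDegree ≤ k := by
    have h := natDegree_le_iff_degree_le.2 hdeg
    rw [← hA, natDegree_expand] at h
    omega
  have h := squareRep_expand k (contract 2 A) hd fun y hy => by
    have h1 := hpos √y ⟨by linarith [Real.sqrt_nonneg y], Real.sqrt_le_one.2 hy.2⟩
    rwa [← hA, expand_eval, Real.sq_sqrt hy.1] at h1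
  rwa [hA] at h
end

section
/- Let d ≥ 1 and define Φ = (φ₁,…,φ_d) ∈ ℝ^d by φ₁ := (1−d)·π/2 and φ_j := π/2 for all 2 ≤ j ≤ d. Then for all x ∈ [−1,1], the (1,1) entry of the matrix product ∏_{j=1}^{d}( e^{iφ_jσ_z} R(x) ) equals T_d(x), the value at x of the d-th Chebyshev polynomial of the first kind. -/
/-!
Write `x = cos θ` with `θ = arccos x`, so that `√(1 - x²) = sin θ`. The phase `π/2` turns the
reflection `R(x)` into `i` times the rotation by `θ` (`zRot_half_pi_mul_Rmat`), so the last `d - 1`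
factors multiply to `i ^ (d - 1)` times the rotation by `(d - 1) θ`. The `(1,1)` entry of the full
product is then `e^{iφ₁} i ^ (d - 1) cos (d θ)` by the addition formula, and
`φ₁ = -(d - 1) π / 2` is exactly the phase cancelling `i ^ (d - 1)`.
-/

open Polynomial Matrix

/-- The 2×2 phase matrix `e^{iφσ_z} = diag(e^{iφ}, e^{−iφ})`. -/
noncomputable def zRot (φ : ℝ) : Matrix (Fin 2) (Fin 2) ℂ :=
  !![Complex.exp (Complex.I * φ), 0; 0, Complex.exp (-(Complex.I * φ))]

/-- The 2×2 reflection matrix `R(x)` with rows `(x, √(1−x²))`, `(√(1−x²), −x)`. -/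
noncomputable def Rmat (x : ℝ) : Matrix (Fin 2) (Fin 2) ℂ :=
  !![(x : ℂ), (Real.sqrt (1 - x ^ 2) : ℝ);
     (Real.sqrt (1 - x ^ 2) : ℝ), -(x : ℂ)]

/-- The rotation matrix with rows `(cos α, sin α)`, `(-sin α, cos α)`, with complex entries. -/
noncomputable def rotMat (α : ℝ) : Matrix (Fin 2) (Fin 2) ℂ :=
  !![(Real.cos α : ℂ), (Real.sin α : ℂ); -(Real.sin α : ℂ), (Real.cos α : ℂ)]

lemma rotMat_mul (α β : ℝ) : rotMat α * rotMat β = rotMat (α + β) := by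
  ext i j
  fin_cases i <;> fin_cases j <;>
    simp [rotMat, Matrix.mul_apply, Fin.sum_univ_two, Complex.cos_add, Complex.sin_add] <;> ring

lemma rotMat_pow (θ : ℝ) (n : ℕ) : rotMat θ ^ n = rotMat (n * θ) := by
  induction n with
  | zero =>
    ext i j
    fin_cases i <;> fin_cases j <;> simp [rotMat]
  | succ n ih =>
    rw [pow_succ, ih, rotMat_mul]
    congr 1
    push_cast
    ring

lemma Rmat_cos {θ : ℝ} (h0 : 0 ≤ θ) (hpi : θ ≤ Real.pi) :
    Rmat (Real.cos θ) =
      !![(Real.cos θ : ℂ), (Real.sin θ : ℂ); (Real.sin θ : ℂ), -(Real.cos θ : ℂ)] := by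
  rw [Rmat, ← Real.sin_eq_sqrt_one_sub_cos_sq h0 hpi]

lemma zRot_half_pi_mul_Rmat {θ : ℝ} (h0 : 0 ≤ θ) (hpi : θ ≤ Real.pi) :
    zRot (Real.pi / 2) * Rmat (Real.cos θ) = Complex.I • rotMat θ := by
  have h1 : Complex.exp (Complex.I * ((Real.pi / 2 : ℝ) : ℂ)) = Complex.I := by
    rw [mul_comm]
    push_cast
    exact Complex.exp_pi_div_two_mul_I
  rw [Rmat_cos h0 hpi, zRot, Complex.exp_neg, h1, Complex.inv_I]
  ext i j
  fin_cases i <;> fin_cases j <;>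
    simp [rotMat, Matrix.mul_apply, Fin.sum_univ_two]

/-- The first phase, for `d = n + 1`, cancels the factor `i ^ n` coming from the other phases. -/
lemma exp_first_phase_mul_I_pow (n : ℕ) :
    Complex.exp (Complex.I * (((1 - ((n + 1 : ℕ) : ℝ)) * Real.pi / 2 : ℝ) : ℂ)) *
      Complex.I ^ n = 1 := by
  nth_rewrite 2 [← Complex.exp_pi_div_two_mul_I]
  rw [← Complex.exp_nat_mul, ← Complex.exp_add, ← Complex.exp_zero]
  congr 1
  push_cast
  ring

theorem qsp_chebyshev (d : ℕ) (hd : 1 ≤ d) (Φ : Fin d → ℝ)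
    (hΦ : ∀ j : Fin d,
      Φ j = if (j : ℕ) = 0 then (1 - (d : ℝ)) * Real.pi / 2 else Real.pi / 2) :
    ∀ x : ℝ, x ∈ Set.Icc (-1 : ℝ) 1 →
      ((List.ofFn fun j : Fin d => zRot (Φ j) * Rmat x).prod) 0 0 =
        (((Polynomial.Chebyshev.T ℝ d).eval x : ℝ) : ℂ) := by
  intro x hx
  obtain ⟨θ, h0, hpi, rfl⟩ : ∃ θ, 0 ≤ θ ∧ θ ≤ Real.pi ∧ Real.cos θ = x :=
    ⟨Real.arccos x, Real.arccos_nonneg x, Real.arccos_le_pi x, Real.cos_arccos hx.1 hx.2⟩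
  obtain ⟨n, rfl⟩ : ∃ n, d = n + 1 := ⟨d - 1, by omega⟩
  have htail : (fun j : Fin n => zRot (Φ j.succ) * Rmat (Real.cos θ)) =
      fun _ => Complex.I • rotMat θ := by
    funext j
    rw [hΦ, if_neg (by simp), zRot_half_pi_mul_Rmat h0 hpi]
  have hhead : Φ 0 = (1 - ((n + 1 : ℕ) : ℝ)) * Real.pi / 2 := by
    rw [hΦ, if_pos (by simp)]
  rw [List.ofFn_succ, List.prod_cons, htail, List.ofFn_const, List.prod_replicate, _root_.smul_pow,
    rotMat_pow, hhead, Rmat_cos h0 hpi, Polynomial.Chebyshev.T_real_cos]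
  have hcos : Real.cos (((n + 1 : ℕ) : ℤ) * θ) =
      Real.cos θ * Real.cos (n * θ) - Real.sin θ * Real.sin (n * θ) := by
    rw [← Real.cos_add]
    congr 1
    push_cast
    ring
  rw [hcos]
  have hphase := exp_first_phase_mul_I_pow n
  simp only [zRot, rotMat, Matrix.mul_apply, Fin.sum_univ_two, Matrix.smul_apply, smul_eq_mul,
    Matrix.of_apply, Matrix.cons_val', Matrix.cons_val_zero, Matrix.cons_val_one,
    Matrix.cons_val_fin_one, Complex.ofReal_sub, Complex.ofReal_mul] at hphase ⊢
  linear_combination (Real.cos θ * Real.cos (n * θ) - Real.sin θ * Real.sin (n * θ) : ℂ) * hphase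
end

section
/- Let U be a unitary N×N complex matrix, Π and Π̃ orthogonal projections on ℂ^N, and A := Π̃UΠ. Suppose ψ and ψ̃ are unit vectors with Πψ = ψ, Π̃ψ̃ = ψ̃, Aψ = ς·ψ̃ and A†ψ̃ = ς·ψ for some real 0 ≤ ς < 1. Then the vectors ψ̃^⊥ := (I−Π̃)Uψ / √(1−ς²) and ψ^⊥ := (I−Π)U†ψ̃ / √(1−ς²) are unit vectors, and U acts on the two-dimensional invariant subspaces as: Uψ = ς·ψ̃ + √(1−ς²)·ψ̃^⊥ and Uψ^⊥ = √(1−ς²)·ψ̃ − ς·ψ̃^⊥. -/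
/-!
Put `v = Uψ` and `w = ψ̃`. The hypothesis `Aψ = ς ψ̃` together with `Πψ = ψ` says `Π̃ v = ς w`, so
`(1 - Π̃) v = v - ς w`. As `Π̃ w = w`, self-adjointness of `Π̃` gives `⟨w, v⟩ = ⟨w, Π̃ v⟩ = ς`, and
hence `‖v - ς w‖² = 1 - ς²` since `v` and `w` are unit vectors (`evnorm_perp`). The pair
`v = U†ψ̃`, `w = ψ` with the projection `Π` is symmetric to this one. The two formulas for the action
of `U` then follow by linearity from `UU† = 1` and `1 - ς² ≠ 0`.
-/

open Matrix

/-- Euclidean norm of a vector in `ℂ^N`. -/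
noncomputable def evnorm {N : ℕ} (v : Fin N → ℂ) : ℝ :=
  Real.sqrt (∑ i, Complex.normSq (v i))

lemma evnorm_eq_one_iff {N : ℕ} (v : Fin N → ℂ) : evnorm v = 1 ↔ star v ⬝ᵥ v = 1 := by
  have h : star v ⬝ᵥ v = ((∑ i, Complex.normSq (v i) : ℝ) : ℂ) := by
    simp [dotProduct, Complex.normSq_eq_conj_mul_self]
  rw [evnorm, Real.sqrt_eq_one, h]
  norm_cast

lemma star_mulVec_dotProduct {N : ℕ} (M : Matrix (Fin N) (Fin N) ℂ) (x y : Fin N → ℂ) :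
    star (M.mulVec x) ⬝ᵥ y = star x ⬝ᵥ Mᴴ.mulVec y := by
  rw [Matrix.star_mulVec, Matrix.dotProduct_mulVec]

/-- If a self-adjoint `P` fixes the unit vector `w` and sends the unit vector `v` to `ς w`, then
`(1 - P) v` has norm `√(1 - ς²)`. -/
lemma evnorm_perp {N : ℕ} (P : Matrix (Fin N) (Fin N) ℂ) (hP : Pᴴ = P) (v w : Fin N → ℂ)
    (hv : star v ⬝ᵥ v = 1) (hw : star w ⬝ᵥ w = 1) (ς : ℝ) (hPw : P.mulVec w = w)
    (hPv : P.mulVec v = (ς : ℂ) • w) (s : ℂ) (hs0 : s ≠ 0) (hs : s * s = 1 - (ς : ℂ) ^ 2)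
    (hsr : star s = s) :
    evnorm (s⁻¹ • ((1 - P).mulVec v)) = 1 := by
  have h1 : star w ⬝ᵥ v = (ς : ℂ) := by
    rw [← hPw, star_mulVec_dotProduct, hP, hPv, dotProduct_smul, hw]; simp
  have h2 : star v ⬝ᵥ w = (ς : ℂ) := by
    have h := congrArg star h1
    rw [← star_dotProduct_star, star_star] at h
    simpa using h
  have hsi : star s⁻¹ = s⁻¹ := by rw [star_inv₀, hsr]
  have hςr : star (ς : ℂ) = ς := Complex.conj_ofReal ς
  rw [evnorm_eq_one_iff, Matrix.sub_mulVec, Matrix.one_mulVec, hPv]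
  simp only [star_smul, star_sub, hsi, hςr, smul_dotProduct, dotProduct_smul, sub_dotProduct,
    dotProduct_sub, h1, h2, hv, hw, smul_eq_mul]
  field_simp
  linear_combination -hs

theorem invariant_two_dim_subspaces (N : ℕ) (U Pr PrT : Matrix (Fin N) (Fin N) ℂ)
    (hU : U ∈ Matrix.unitaryGroup (Fin N) ℂ)
    (hPrProj : Prᴴ = Pr ∧ Pr * Pr = Pr)
    (hPrTProj : PrTᴴ = PrT ∧ PrT * PrT = PrT)
    (ψ ψt : Fin N → ℂ)
    (hψunit : evnorm ψ = 1) (hψtunit : evnorm ψt = 1)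
    (hψ : Pr.mulVec ψ = ψ) (hψt : PrT.mulVec ψt = ψt)
    (ς : ℝ) (hς0 : 0 ≤ ς) (hς1 : ς < 1)
    (hAψ : (PrT * U * Pr).mulVec ψ = (ς : ℂ) • ψt)
    (hAψt : (PrT * U * Pr)ᴴ.mulVec ψt = (ς : ℂ) • ψ) :
    let s : ℂ := ((Real.sqrt (1 - ς ^ 2) : ℝ) : ℂ)
    let ψtperp : Fin N → ℂ := s⁻¹ • ((1 - PrT).mulVec (U.mulVec ψ))
    let ψperp : Fin N → ℂ := s⁻¹ • ((1 - Pr).mulVec (Uᴴ.mulVec ψt))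
    evnorm ψtperp = 1 ∧ evnorm ψperp = 1 ∧
      U.mulVec ψ = (ς : ℂ) • ψt + s • ψtperp ∧
      U.mulVec ψperp = s • ψt - (ς : ℂ) • ψtperp := by
  intro s ψtperp ψperp
  have hpos : 0 < 1 - ς ^ 2 := by nlinarith
  have hs0 : s ≠ 0 := by
    simpa [s] using (Real.sqrt_pos.mpr hpos).ne'
  have hs : s * s = 1 - (ς : ℂ) ^ 2 := by
    have h := Real.mul_self_sqrt hpos.le
    simp only [s]
    exact_mod_cast h
  have hsr : star s = s := Complex.conj_ofReal _
  have hUU : U * Uᴴ = 1 := Matrix.mem_unitaryGroup_iff.mp hU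
  have hUU' : Uᴴ * U = 1 := Matrix.mem_unitaryGroup_iff'.mp hU
  have hu := (evnorm_eq_one_iff ψ).mp hψunit
  have hut := (evnorm_eq_one_iff ψt).mp hψtunit
  have e1 : PrT.mulVec (U.mulVec ψ) = (ς : ℂ) • ψt := by
    rw [← hAψ, ← Matrix.mulVec_mulVec, ← Matrix.mulVec_mulVec, hψ]
  have e2 : Pr.mulVec (Uᴴ.mulVec ψt) = (ς : ℂ) • ψ := by
    rw [← hAψt, Matrix.conjTranspose_mul, Matrix.conjTranspose_mul, hPrProj.1, hPrTProj.1,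
      ← Matrix.mulVec_mulVec, ← Matrix.mulVec_mulVec, hψt]
  have n1 : star (U.mulVec ψ) ⬝ᵥ U.mulVec ψ = 1 := by
    rw [star_mulVec_dotProduct, Matrix.mulVec_mulVec, hUU', Matrix.one_mulVec, hu]
  have n2 : star (Uᴴ.mulVec ψt) ⬝ᵥ Uᴴ.mulVec ψt = 1 := by
    rw [star_mulVec_dotProduct, Matrix.mulVec_mulVec, Matrix.conjTranspose_conjTranspose, hUU,
      Matrix.one_mulVec, hut]
  refine ⟨evnorm_perp PrT hPrTProj.1 _ _ n1 hut ς hψt e1 s hs0 hs hsr,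
    evnorm_perp Pr hPrProj.1 _ _ n2 hu ς hψ e2 s hs0 hs hsr, ?_, ?_⟩
  · simp only [ψtperp]
    rw [smul_inv_smul₀ hs0, Matrix.sub_mulVec, Matrix.one_mulVec, e1]
    abel
  · simp only [ψtperp, ψperp]
    rw [Matrix.sub_mulVec, Matrix.sub_mulVec, Matrix.one_mulVec, Matrix.one_mulVec, e1, e2,
      Matrix.mulVec_smul, Matrix.mulVec_sub, Matrix.mulVec_mulVec, hUU, Matrix.one_mulVec,
      Matrix.mulVec_smul]
    ext i
    simp only [Pi.smul_apply, Pi.sub_apply, smul_eq_mul]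
    field_simp
    linear_combination (-ψt i) * hs
end

section
/- Let U, Π, Π̃ and a singular value decomposition A := Π̃UΠ = ∑_{i=1}^{d_min} ς_i ψ̃_iψ_i† be as in the context. Let n ≥ 1, let P ∈ ℂ[x] have degree at most n and parity (n mod 2), and let Φ = (φ₁,…,φ_n) ∈ ℝ^n be such that for all x ∈ [−1,1] the (1,1) entry of ∏_{j=1}^{n}( e^{iφ_jσ_z} R(x) ) equals P(x), where e^{iφσ_z} := diag(e^{iφ}, e^{−iφ}) and R(x) is the 2×2 reflection with rows (x, √(1−x²)) and (√(1−x²), −x). Then: if n is odd, Π̃ U_Φ Π = ∑_{i=1}^{d_min} P(ς_i) ψ̃_iψ_i†; and if n is even, Π U_Φ Π = ∑_{i=1}^{d} P(ς_i) ψ_iψ_i† (with ς_i := 0 for i > d_min). -/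
/-!
The proof is qubitization. Extend the left singular vectors by zero, so that each right singular
vector `v = ψ i` has a partner `t` with `Π̃ U v = s t` and `Π U† t = s v`. With `c = √(1 - s²)` put
`v⊥ = c⁻¹ (U† t - s v)` and `t⊥ = c⁻¹ (U v - s t)`; then `Π v⊥ = 0`, `Π̃ t⊥ = 0`, and the `N × 2`
matrices `V = (v, v⊥)` and `T = (t, t⊥)` satisfy `U V = T R(s)` and `U† T = V R(s)`, while the two
phase operators act on `V` and `T` through the diagonal matrices `zRot`
(`intertwine`). Hence the alternating sequence sends `V` to `V` or `T` times the `2 × 2` product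
whose `(0, 0)` entry is `P(s)`. As `Π v⊥ = 0` and `Π̃ t⊥ = 0`, projecting the first column gives
`P(s) v` or `P(s) t`; summing over the rank-one pieces of `Π` gives the theorem.

Division by `c = 0` causes no harm: if `s = 1` then `U v = t`, and the junk value
`v⊥ = t⊥ = 0` is the correct one. The zero partner `t = 0` occurs only for `s = 0`.
-/


open Polynomial Matrix

/-- `P` has parity `n mod 2`: all coefficients of the opposite parity vanish. -/
def HasParity (n : ℕ) (P : Polynomial ℂ) : Prop :=
  ∀ j, j % 2 ≠ n % 2 → P.coeff j = 0

/-- The operator `e^{iφ(2Q−I)} = e^{iφ}Q + e^{−iφ}(I−Q)` for a projector `Q`. -/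
noncomputable def phaseOp {N : ℕ} (Q : Matrix (Fin N) (Fin N) ℂ) (φ : ℝ) :
    Matrix (Fin N) (Fin N) ℂ :=
  Complex.exp (Complex.I * φ) • Q + Complex.exp (-(Complex.I * φ)) • (1 - Q)

/-- The alternating phase modulation sequence `U_Φ` with phases `Φ 1, …, Φ n`. -/
noncomputable def altSeq {N : ℕ} (U Pr PrT : Matrix (Fin N) (Fin N) ℂ) (n : ℕ)
    (Φ : ℕ → ℝ) : Matrix (Fin N) (Fin N) ℂ :=
  if n % 2 = 1 then
    phaseOp PrT (Φ 1) * U *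
      ((List.range ((n - 1) / 2)).map
        (fun j => phaseOp Pr (Φ (2 * j + 2)) * Uᴴ * phaseOp PrT (Φ (2 * j + 3)) * U)).prod
  else
    ((List.range (n / 2)).map
      (fun j => phaseOp Pr (Φ (2 * j + 1)) * Uᴴ * phaseOp PrT (Φ (2 * j + 2)) * U)).prod

/-! ### The two-dimensional picture of one singular value -/

/-- The `N × 2` matrix with columns `v` and `w`. -/
def cols {N : ℕ} (v w : Fin N → ℂ) : Matrix (Fin N) (Fin 2) ℂ :=
  (Matrix.of ![v, w])ᵀ

lemma mul_cols {N : ℕ} (A : Matrix (Fin N) (Fin N) ℂ) (v w : Fin N → ℂ) :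
    A * cols v w = cols (A *ᵥ v) (A *ᵥ w) := by
  ext k j
  fin_cases j <;> rfl

lemma cols_mul {N : ℕ} (v w : Fin N → ℂ) (a b c d : ℂ) :
    cols v w * !![a, b; c, d] = cols (a • v + c • w) (b • v + d • w) := by
  ext k j
  fin_cases j <;> simp [cols, Matrix.mul_apply, Fin.sum_univ_two, mul_comm]

lemma phase_cols {N : ℕ} (Q : Matrix (Fin N) (Fin N) ℂ) (φ : ℝ) (v w : Fin N → ℂ)
    (hv : Q *ᵥ v = v) (hw : Q *ᵥ w = 0) :
    phaseOp Q φ * cols v w = cols v w * zRot φ := by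
  rw [mul_cols, zRot, cols_mul, phaseOp]
  simp [add_mulVec, smul_mulVec, sub_mulVec, hv, hw]

open scoped ComplexOrder in
/-- The two-dimensional invariant picture attached to one singular value `s`: the pairs
`(v, v⊥)` and `(t, t⊥)` are adapted to the projectors, and `U`, `U†` exchange them via `R(s)`.
The bound `s ≤ 1` comes from `0 ≤ ‖U v - s t‖² = 1 - s²`.
The dichotomy `ht` covers genuine left singular vectors and the extension by zero. -/
lemma intertwine {N : ℕ} (U Pr PrT : Matrix (Fin N) (Fin N) ℂ) (hU1 : Uᴴ * U = 1)
    (hU2 : U * Uᴴ = 1) (hT : PrTᴴ = PrT) (v t : Fin N → ℂ) (s : ℝ)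
    (hs : 0 ≤ s) (hv : star v ⬝ᵥ v = 1)
    (ht : star t ⬝ᵥ t = 1 ∨ s = 0)
    (hPv : Pr *ᵥ v = v) (hPt : PrT *ᵥ t = t)
    (h1 : PrT *ᵥ (U *ᵥ v) = (s : ℂ) • t) (h2 : Pr *ᵥ (Uᴴ *ᵥ t) = (s : ℂ) • v) :
    s ≤ 1 ∧ ∃ v' t' : Fin N → ℂ, Pr *ᵥ v' = 0 ∧ PrT *ᵥ t' = 0 ∧
      U * cols v v' = cols t t' * Rmat s ∧ Uᴴ * cols t t' = cols v v' * Rmat s := by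
  have hUU (x) : Uᴴ *ᵥ (U *ᵥ x) = x := by rw [mulVec_mulVec, hU1, one_mulVec]
  have hUU' (x) : U *ᵥ (Uᴴ *ᵥ x) = x := by rw [mulVec_mulVec, hU2, one_mulVec]
  have key : s ≤ 1 ∧ (s = 1 → U *ᵥ v = t) := by
    rcases ht with ht | ht
    · have e1 : star t ⬝ᵥ (U *ᵥ v) = s := by
        have : star t ⬝ᵥ (PrT *ᵥ (U *ᵥ v)) = s := by
          rw [h1, dotProduct_smul, ht]; simp
        rw [dotProduct_mulVec] at this
        have h3 : star t ᵥ* PrT = star t := by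
          conv_lhs => rw [← hT]
          rw [← star_mulVec, hPt]
        rwa [h3] at this
      have e2 : star (U *ᵥ v) ⬝ᵥ t = s := by
        have := congrArg star e1
        rw [← star_dotProduct_star] at this
        simpa [dotProduct_comm] using this
      have e3 : star (U *ᵥ v) ⬝ᵥ (U *ᵥ v) = 1 := by
        rw [star_mulVec, ← dotProduct_mulVec, hUU, hv]
      -- `‖U v - s t‖² = 1 - s²`
      have e4 : star (U *ᵥ v - (s : ℂ) • t) ⬝ᵥ (U *ᵥ v - (s : ℂ) • t)
          = ((1 - s ^ 2 : ℝ) : ℂ) := by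
        rw [star_sub, star_smul, sub_dotProduct, dotProduct_sub, dotProduct_sub]
        simp only [smul_dotProduct, dotProduct_smul, e1, e2, e3, ht]
        simp
        ring
      constructor
      · have := dotProduct_star_self_nonneg (U *ᵥ v - (s : ℂ) • t)
        rw [e4] at this
        have h5 : (0 : ℝ) ≤ 1 - s ^ 2 := by exact_mod_cast this
        nlinarith
      · intro h
        rw [h] at e4
        have := dotProduct_star_self_eq_zero.mp (show star (U *ᵥ v - ((1 : ℝ) : ℂ) • t) ⬝ᵥ
          (U *ᵥ v - ((1 : ℝ) : ℂ) • t) = 0 by rw [e4]; simp)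
        rw [sub_eq_zero] at this
        simpa using this
    · subst ht; simp
  obtain ⟨hs1, hs2⟩ := key
  refine ⟨hs1, ?_⟩
  set c := Real.sqrt (1 - s ^ 2) with hc
  have hcc : (c : ℂ) * c = 1 - s * s := by
    have : c * c = 1 - s * s := by rw [hc, Real.mul_self_sqrt (by nlinarith)]; ring
    exact_mod_cast this
  -- also valid for `c = 0`, where `s = 1` and both vectors in parentheses vanish
  have hcan : (c : ℂ) • (c : ℂ)⁻¹ • (U *ᵥ v - (s : ℂ) • t) = U *ᵥ v - (s : ℂ) • t ∧
      (c : ℂ) • (c : ℂ)⁻¹ • (Uᴴ *ᵥ t - (s : ℂ) • v) = Uᴴ *ᵥ t - (s : ℂ) • v ∧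
      (c : ℂ)⁻¹ • ((1 - s * s : ℂ) • t) = (c : ℂ) • t ∧
      (c : ℂ)⁻¹ • ((1 - s * s : ℂ) • v) = (c : ℂ) • v := by
    by_cases h0 : (c : ℂ) = 0
    · have h1s : s = 1 := by
        have : c = 0 := by exact_mod_cast h0
        rw [hc, Real.sqrt_eq_zero (by nlinarith)] at this
        nlinarith
      have h4 := hs2 h1s
      have h5 : Uᴴ *ᵥ t = v := by rw [← h4, hUU]
      simp [h0, h1s, h4, h5]
    · refine ⟨smul_inv_smul₀ h0 _, smul_inv_smul₀ h0 _, ?_, ?_⟩ <;>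
        rw [← hcc, smul_smul, inv_mul_cancel_left₀ h0]
  obtain ⟨c1, c2, c3, c4⟩ := hcan
  refine ⟨(c : ℂ)⁻¹ • (Uᴴ *ᵥ t - (s : ℂ) • v), (c : ℂ)⁻¹ • (U *ᵥ v - (s : ℂ) • t), ?_, ?_, ?_, ?_⟩
  · rw [mulVec_smul, mulVec_sub, h2, mulVec_smul, hPv, sub_self, smul_zero]
  · rw [mulVec_smul, mulVec_sub, h1, mulVec_smul, hPt, sub_self, smul_zero]
  · rw [mul_cols, Rmat, cols_mul, ← hc, c1]
    congr 1
    · simp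
    · rw [mulVec_smul, mulVec_sub, hUU', mulVec_smul, ← c3]
      module
  · rw [mul_cols, Rmat, cols_mul, ← hc, c2]
    congr 1
    · simp
    · rw [mulVec_smul, mulVec_sub, hUU, mulVec_smul, ← c4]
      module

/-! ### The alternating sequence on the invariant pairs -/

/-- The `2 × 2` phase-reflection product of `hQSP`, re-indexed over `List.range`. -/
noncomputable def qsp (Φ : ℕ → ℝ) (x : ℝ) (n : ℕ) : Matrix (Fin 2) (Fin 2) ℂ :=
  ((List.range n).map fun j => zRot (Φ (j + 1)) * Rmat x).prod

lemma qsp_eq (Φ : ℕ → ℝ) (x : ℝ) (n : ℕ) :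
    (List.ofFn fun j : Fin n => zRot (Φ ((j : ℕ) + 1)) * Rmat x).prod = qsp Φ x n := by
  rw [qsp, List.ofFn_eq_map, ← List.map_coe_finRange_eq_range, List.map_map]
  rfl

lemma qsp_succ (Φ : ℕ → ℝ) (x : ℝ) (n : ℕ) :
    qsp Φ x (n + 1) = qsp Φ x n * (zRot (Φ (n + 1)) * Rmat x) := by
  simp [qsp, List.range_succ]

/-- One period `phase · U† · phase · U` of the sequence acts on `V` as two steps of the `2 × 2`
product. -/
lemma even_seq {N : ℕ} {U Pr PrT : Matrix (Fin N) (Fin N) ℂ} {s : ℝ}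
    {V T : Matrix (Fin N) (Fin 2) ℂ} (hV : ∀ φ, phaseOp Pr φ * V = V * zRot φ)
    (hT : ∀ φ, phaseOp PrT φ * T = T * zRot φ) (hU : U * V = T * Rmat s)
    (hU' : Uᴴ * T = V * Rmat s) (a b : ℝ) :
    phaseOp Pr a * Uᴴ * phaseOp PrT b * U * V
      = V * (zRot a * Rmat s * (zRot b * Rmat s)) := by
  rw [Matrix.mul_assoc _ U, hU, ← Matrix.mul_assoc, Matrix.mul_assoc _ (phaseOp PrT b), hT,
    ← Matrix.mul_assoc, Matrix.mul_assoc _ Uᴴ, hU', ← Matrix.mul_assoc, hV]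
  simp only [Matrix.mul_assoc]

lemma altSeq_even {N : ℕ} {U Pr PrT : Matrix (Fin N) (Fin N) ℂ} {s : ℝ}
    {V T : Matrix (Fin N) (Fin 2) ℂ} (hV : ∀ φ, phaseOp Pr φ * V = V * zRot φ)
    (hT : ∀ φ, phaseOp PrT φ * T = T * zRot φ) (hU : U * V = T * Rmat s)
    (hU' : Uᴴ * T = V * Rmat s) (Φ : ℕ → ℝ) (n : ℕ) (hn : Even n) :
    altSeq U Pr PrT n Φ * V = V * qsp Φ s n := by
  obtain ⟨m, rfl⟩ := hn
  rw [← two_mul, altSeq, if_neg (by omega), Nat.mul_div_cancel_left _ two_pos]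
  induction m with
  | zero => simp [qsp]
  | succ m ih =>
    rw [List.range_succ, List.map_append, List.prod_append, List.map_singleton,
      List.prod_singleton, Matrix.mul_assoc, even_seq hV hT hU hU', ← Matrix.mul_assoc, ih,
      show 2 * (m + 1) = 2 * m + 1 + 1 by ring, qsp_succ, qsp_succ]
    simp only [Matrix.mul_assoc]

lemma altSeq_odd {N : ℕ} {U Pr PrT : Matrix (Fin N) (Fin N) ℂ} {s : ℝ}
    {V T : Matrix (Fin N) (Fin 2) ℂ} (hV : ∀ φ, phaseOp Pr φ * V = V * zRot φ)
    (hT : ∀ φ, phaseOp PrT φ * T = T * zRot φ) (hU : U * V = T * Rmat s)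
    (hU' : Uᴴ * T = V * Rmat s) (Φ : ℕ → ℝ) (n : ℕ) (hn : Odd n) :
    altSeq U Pr PrT n Φ * V = T * qsp Φ s n := by
  obtain ⟨m, rfl⟩ := hn
  rw [altSeq, if_pos (by omega), Nat.add_sub_cancel, Nat.mul_div_cancel_left _ two_pos]
  induction m with
  | zero =>
    simp only [List.range_zero, List.map_nil, List.prod_nil, mul_one]
    rw [Matrix.mul_assoc, hU, ← Matrix.mul_assoc, hT, Matrix.mul_assoc]
    simp [qsp]
  | succ m ih =>
    rw [List.range_succ, List.map_append, List.prod_append, List.map_singleton,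
      List.prod_singleton, ← Matrix.mul_assoc, Matrix.mul_assoc _ _ V,
      even_seq hV hT hU hU', ← Matrix.mul_assoc, ih,
      show 2 * (m + 1) + 1 = 2 * m + 1 + 1 + 1 by ring,
      qsp_succ _ _ (2 * m + 1 + 1), qsp_succ _ _ (2 * m + 1)]
    simp only [Matrix.mul_assoc]

/-- Reading off the first column of an intertwining relation after projecting: only the
`(0, 0)` entry of the small matrix survives. -/
lemma first_col {N : ℕ} (X Q : Matrix (Fin N) (Fin N) ℂ) (v v' t t' : Fin N → ℂ)
    (M : Matrix (Fin 2) (Fin 2) ℂ) (h : X * cols v v' = cols t t' * M)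
    (ht : Q *ᵥ t = t) (ht' : Q *ᵥ t' = 0) : (Q * X) *ᵥ v = M 0 0 • t := by
  have h2 : Q * X * cols v v' = cols t 0 * M := by
    rw [Matrix.mul_assoc, h, ← Matrix.mul_assoc, mul_cols, ht, ht']
  ext k
  have := congrFun (congrFun h2 k) 0
  rw [mul_cols] at this
  simpa [cols, Matrix.mul_apply, Fin.sum_univ_two, mul_comm] using this

/-! ### Sums of rank-one pieces -/

/-- The left singular vectors, extended by zero to all natural indices. -/
def extZero {N dt : ℕ} (ψt : Fin dt → Fin N → ℂ) (k : ℕ) : Fin N → ℂ :=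
  if h : k < dt then ψt ⟨k, h⟩ else 0

lemma sum_extZero {N d dt : ℕ} (ψ : Fin d → Fin N → ℂ) (ψt : Fin dt → Fin N → ℂ) (f : ℕ → ℂ) :
    ∑ i : Fin (min d dt), f i.val • vecMulVec (ψt (Fin.castLE (min_le_right d dt) i))
        (star (ψ (Fin.castLE (min_le_left d dt) i)))
      = ∑ i : Fin d, f i.val • vecMulVec (extZero ψt i.val) (star (ψ i)) := by
  refine Fintype.sum_of_injective (Fin.castLE (min_le_left d dt))
    (Fin.castLE_injective _) _ _ ?_ ?_
  · intro i hi
    have : ¬ i.val < dt := fun h => hi ⟨⟨i.val, lt_min i.2 h⟩, rfl⟩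
    simp [extZero, this]
  · intro i
    have : i.val < dt := lt_of_lt_of_le i.2 (min_le_right _ _)
    simp only [extZero, Fin.val_castLE, this, dif_pos]
    rfl

lemma sum_mulVec_orth {N d : ℕ} (w ψ : Fin d → Fin N → ℂ) (f : Fin d → ℂ) (x : Fin N → ℂ)
    (i : Fin d) (h : ∀ j, j ≠ i → star (ψ j) ⬝ᵥ x = 0) :
    (∑ j, f j • vecMulVec (w j) (star (ψ j))) *ᵥ x = (f i * (star (ψ i) ⬝ᵥ x)) • w i := by
  rw [sum_mulVec, Finset.sum_eq_single i]
  · rw [smul_mulVec, vecMulVec_mulVec]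
    ext k
    simp [mul_comm, mul_left_comm]
  · intro j _ hj
    rw [smul_mulVec, vecMulVec_mulVec, h j hj]
    simp
  · simp

theorem singular_value_transformation (N d dt : ℕ)
    (U Pr PrT : Matrix (Fin N) (Fin N) ℂ)
    (hU : U ∈ Matrix.unitaryGroup (Fin N) ℂ)
    (hPrProj : Prᴴ = Pr ∧ Pr * Pr = Pr)
    (hPrTProj : PrTᴴ = PrT ∧ PrT * PrT = PrT)
    (ψ : Fin d → Fin N → ℂ) (ψt : Fin dt → Fin N → ℂ)
    (hON : ∀ i j, star (ψ i) ⬝ᵥ ψ j = if i = j then 1 else 0)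
    (hONt : ∀ i j, star (ψt i) ⬝ᵥ ψt j = if i = j then 1 else 0)
    (hPreq : Pr = ∑ i, vecMulVec (ψ i) (star (ψ i)))
    (hPrTeq : PrT = ∑ i, vecMulVec (ψt i) (star (ψt i)))
    (ς : ℕ → ℝ) (hςnn : ∀ i, 0 ≤ ς i) (hς0 : ∀ i, min d dt ≤ i → ς i = 0)
    (hSVD : PrT * U * Pr = ∑ i : Fin (min d dt),
      ((ς i.val : ℝ) : ℂ) • vecMulVec (ψt (Fin.castLE (min_le_right d dt) i))
        (star (ψ (Fin.castLE (min_le_left d dt) i))))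
    (n : ℕ) (hn : 1 ≤ n) (P : Polynomial ℂ)
    (hdeg : P.degree ≤ (n : WithBot ℕ)) (hpar : HasParity n P)
    (Φ : ℕ → ℝ)
    (hQSP : ∀ x : ℝ, x ∈ Set.Icc (-1 : ℝ) 1 →
      ((List.ofFn fun j : Fin n => zRot (Φ ((j : ℕ) + 1)) * Rmat x).prod) 0 0
        = P.eval (x : ℂ)) :
    (Odd n → PrT * altSeq U Pr PrT n Φ * Pr =
      ∑ i : Fin (min d dt), P.eval ((ς i.val : ℝ) : ℂ) •
        vecMulVec (ψt (Fin.castLE (min_le_right d dt) i))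
          (star (ψ (Fin.castLE (min_le_left d dt) i)))) ∧
    (Even n → Pr * altSeq U Pr PrT n Φ * Pr =
      ∑ i : Fin d, P.eval ((ς i.val : ℝ) : ℂ) • vecMulVec (ψ i) (star (ψ i))) := by
  have hU1 : Uᴴ * U = 1 := Matrix.mem_unitaryGroup_iff'.mp hU
  have hU2 : U * Uᴴ = 1 := Matrix.mem_unitaryGroup_iff.mp hU
  have hPψ (i : Fin d) : Pr *ᵥ ψ i = ψ i := by
    have := sum_mulVec_orth ψ ψ (fun _ => 1) (ψ i) i (fun j hj => by simp [hON, hj])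
    simpa [hON, ← hPreq] using this
  have hPψt (i : ℕ) : PrT *ᵥ extZero ψt i = extZero ψt i := by
    by_cases hi : i < dt
    · have := sum_mulVec_orth ψt ψt (fun _ => 1) (ψt ⟨i, hi⟩) ⟨i, hi⟩
        (fun j hj => by simp [hONt, hj])
      simpa [extZero, hi, hONt, ← hPrTeq] using this
    · simp [extZero, hi]
  rw [sum_extZero ψ ψt fun k => (ς k : ℂ)] at hSVD
  have h1 (i : Fin d) : PrT *ᵥ (U *ᵥ ψ i) = (ς i : ℂ) • extZero ψt i := by
    have := sum_mulVec_orth (fun i : Fin d => extZero ψt i) ψ (fun i => (ς i : ℂ)) (ψ i) i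
      (fun j hj => by simp [hON, hj])
    rw [← hSVD] at this
    simpa [hON, ← mulVec_mulVec, hPψ] using this
  have h2 (i : Fin d) : Pr *ᵥ (Uᴴ *ᵥ extZero ψt i) = (ς i : ℂ) • ψ i := by
    by_cases hi : i.val < dt
    · have hA : Pr * Uᴴ * PrT
          = ∑ i : Fin d, (ς i : ℂ) • vecMulVec (ψ i) (star (extZero ψt i)) := by
        have := congrArg conjTranspose hSVD
        simpa [conjTranspose_mul, hPrProj.1, hPrTProj.1, conjTranspose_sum,
          conjTranspose_vecMulVec, Matrix.mul_assoc] using this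
      have := sum_mulVec_orth ψ (fun i : Fin d => extZero ψt i) (fun i => (ς i : ℂ))
        (extZero ψt i) i (fun j hj => by
          by_cases hj' : j.val < dt
          · simp [extZero, hi, hj', hONt, Fin.val_ne_of_ne hj]
          · simp [extZero, hj'])
      rw [← hA, ← mulVec_mulVec, hPψt, ← mulVec_mulVec] at this
      simpa [extZero, hi, hONt] using this
    · rw [hς0 i (by omega)]
      simp [extZero, hi]
  have main (i : Fin d) := intertwine U Pr PrT hU1 hU2 hPrTProj.1 (ψ i) (extZero ψt i) (ς i)
    (hςnn i) (by simp [hON])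
    (by
      by_cases hi : i.val < dt
      · left; simp [extZero, hi, hONt]
      · right; exact hς0 i (by omega))
    (hPψ i) (hPψt i) (h1 i) (h2 i)
  have hP (i : Fin d) : qsp Φ (ς i) n 0 0 = P.eval ((ς i : ℝ) : ℂ) := by
    rw [← hQSP _ ⟨by linarith [hςnn i], (main i).1⟩, qsp_eq]
  have hsum (X : Matrix (Fin N) (Fin N) ℂ) :
      X * Pr = ∑ i, vecMulVec (X *ᵥ ψ i) (star (ψ i)) := by
    rw [hPreq, Finset.mul_sum]
    simp only [mul_vecMulVec]
  constructor
  · intro hodd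
    rw [sum_extZero ψ ψt fun k => P.eval (ς k : ℂ), hsum]
    refine Finset.sum_congr rfl fun i _ => ?_
    obtain ⟨-, v', t', hv', ht', hUV, hUT⟩ := main i
    rw [first_col _ _ _ v' _ t' _ (altSeq_odd
      (fun φ => phase_cols Pr φ _ _ (hPψ i) hv') (fun φ => phase_cols PrT φ _ _ (hPψt i) ht')
      hUV hUT Φ n hodd) (hPψt i) ht', hP, smul_vecMulVec]
  · intro heven
    rw [hsum]
    refine Finset.sum_congr rfl fun i _ => ?_
    obtain ⟨-, v', t', hv', ht', hUV, hUT⟩ := main i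
    rw [first_col _ _ _ v' _ v' _ (altSeq_even
      (fun φ => phase_cols Pr φ _ _ (hPψ i) hv') (fun φ => phase_cols PrT φ _ _ (hPψt i) ht')
      hUV hUT Φ n heven) (hPψ i) hv', hP, smul_vecMulVec]
end

section
/- Let A ∈ ℂ^{d̃×d} have the full singular value decomposition A = ∑_{i=1}^{d_min} ς_i w_i v_i† described in the context, and let Ā := fromBlocks 0 A A† 0 be its Hermitian dilation. Then for every even polynomial p ∈ ℂ[x], p(Ā) = fromBlocks (∑_{i=1}^{d̃} p(ς_i) w_iw_i†) 0 0 (∑_{i=1}^{d} p(ς_i) v_iv_i†); and for every odd polynomial p ∈ ℂ[x], p(Ā) = fromBlocks 0 (∑_{i=1}^{d_min} p(ς_i) w_iv_i†) (∑_{i=1}^{d_min} p(ς_i) v_iw_i†) 0, where polynomials are applied to square matrices by polynomial evaluation. -/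
/-!
Collect the singular vectors into unitary matrices `W`, `V`. Every block in the theorem has the form
`X * rectDiag f * Yᴴ` with `X, Y ∈ {W, V}` and `rectDiag f` the rectangular diagonal matrix with
entries `f i`; in particular `A = W * rectDiag ς * Vᴴ`. Such blocks multiply by multiplying the
diagonal entries (`sandwich_mul`), as long as no entry is lost to the inner dimension, which holds
because `ς` vanishes from index `min d dt` on. By induction on the polynomial, the dilation satisfies,
for every `p`, that `p(Ā)` has diagonal blocks built from `(p(ς) + p(-ς)) / 2` and off-diagonal
blocks built from `(p(ς) - p(-ς)) / 2` (`aeval_dilation`): multiplying by `Ā` exchanges the two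
parts and multiplies by `ς`. For even or odd `p` one part is `p(ς)` and the other is zero.
-/

open Polynomial Matrix

/-- The `m × n` rectangular diagonal matrix with diagonal entries `f 0, f 1, …`. The entries are
indexed by `ℕ` so that the same `f` serves all four block shapes. -/
def rectDiag (m n : ℕ) (f : ℕ → ℂ) : Matrix (Fin m) (Fin n) ℂ :=
  Matrix.of fun i j => if i.val = j.val then f i.val else 0

theorem rectDiag_mul (m n k : ℕ) (f g : ℕ → ℂ) (h : ∀ i, n ≤ i → f i * g i = 0) :
    rectDiag m n f * rectDiag n k g = rectDiag m k (fun i => f i * g i) := by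
  ext i j
  simp only [rectDiag, Matrix.mul_apply, Matrix.of_apply]
  by_cases hi : i.val < n
  · rw [Finset.sum_eq_single (⟨i.val, hi⟩ : Fin n)]
    · simp
    · intro b _ hb
      have : i.val ≠ b.val := fun h' => hb (Fin.ext h'.symm)
      simp [this]
    · simp
  · rw [h i (not_lt.mp hi), ite_self]
    refine Finset.sum_eq_zero fun b _ => ?_
    have : i.val ≠ b.val := by omega
    simp [this]

theorem sandwich_mul {m n k : ℕ} (X : Matrix (Fin m) (Fin m) ℂ) (Y : Matrix (Fin n) (Fin n) ℂ)
    (Z : Matrix (Fin k) (Fin k) ℂ) (hY : Yᴴ * Y = 1) (f g : ℕ → ℂ)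
    (h : ∀ i, n ≤ i → f i * g i = 0) :
    (X * rectDiag m n f * Yᴴ) * (Y * rectDiag n k g * Zᴴ)
      = X * rectDiag m k (fun i => f i * g i) * Zᴴ := by
  rw [← rectDiag_mul m n k f g h]
  calc _ = X * rectDiag m n f * (Yᴴ * Y) * rectDiag n k g * Zᴴ := by simp only [Matrix.mul_assoc]
    _ = _ := by rw [hY]; simp only [Matrix.mul_assoc, Matrix.one_mul]

theorem sandwich_add {m n : ℕ} (X : Matrix (Fin m) (Fin m) ℂ) (Y : Matrix (Fin n) (Fin n) ℂ)
    (f g : ℕ → ℂ) :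
    X * rectDiag m n f * Yᴴ + X * rectDiag m n g * Yᴴ
      = X * rectDiag m n (fun i => f i + g i) * Yᴴ := by
  rw [← Matrix.add_mul, ← Matrix.mul_add]
  congr 2
  ext i j
  simp only [rectDiag, Matrix.add_apply, Matrix.of_apply]
  split_ifs <;> simp

theorem sandwich_zero {m n : ℕ} (X : Matrix (Fin m) (Fin m) ℂ) (Y : Matrix (Fin n) (Fin n) ℂ) :
    X * rectDiag m n (fun _ => 0) * Yᴴ = 0 := by
  have : rectDiag m n (fun _ => 0) = 0 := by
    ext i j
    simp [rectDiag]
  rw [this]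
  simp

theorem sandwich_const {m : ℕ} (X : Matrix (Fin m) (Fin m) ℂ) (hX : Xᴴ * X = 1) (c : ℂ) :
    X * rectDiag m m (fun _ => c) * Xᴴ = c • 1 := by
  have : rectDiag m m (fun _ => c) = c • 1 := by
    ext i j
    simp [rectDiag, Matrix.one_apply, Fin.ext_iff]
  rw [this, Matrix.mul_smul, Matrix.mul_one, Matrix.smul_mul, mul_eq_one_comm.mp hX]

/-- The rank-one expansion of `X * rectDiag f * Yᴴ`, where `x`, `y` are the columns of `X`, `Y`. It
may be cut off at any `k` beyond which no diagonal entry inside the matrix is nonzero. -/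
theorem sandwich_eq_sum {m n : ℕ} (k : ℕ) (hm : k ≤ m) (hn : k ≤ n) (x : Fin m → Fin m → ℂ)
    (y : Fin n → Fin n → ℂ) (f : ℕ → ℂ) (h : ∀ i, k ≤ i → i < m → i < n → f i = 0) :
    (Matrix.of x)ᵀ * rectDiag m n f * ((Matrix.of y)ᵀ)ᴴ
      = ∑ i : Fin k, f i.val • vecMulVec (x (Fin.castLE hm i)) (star (y (Fin.castLE hn i))) := by
  have hS : rectDiag m n f
      = ∑ i : Fin k, Matrix.single (Fin.castLE hm i) (Fin.castLE hn i) (f i.val) := by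
    ext a b
    simp only [rectDiag, Matrix.of_apply, Matrix.sum_apply, Matrix.single_apply]
    by_cases hab : a.val = b.val
    · by_cases ha : a.val < k
      · rw [Finset.sum_eq_single (⟨a.val, ha⟩ : Fin k)]
        · simp [hab, Fin.ext_iff]
        · intro c _ hc
          have : c.val ≠ a.val := fun h' => hc (Fin.ext h')
          simp [Fin.ext_iff, this]
        · simp
      · rw [if_pos hab, h a (not_lt.mp ha) a.2 (hab ▸ b.2)]
        refine (Finset.sum_eq_zero fun c _ => ?_).symm
        have : c.val ≠ a.val := by omega
        simp [Fin.ext_iff, this]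
    · rw [if_neg hab]
      refine (Finset.sum_eq_zero fun c _ => ?_).symm
      rw [if_neg]
      rintro ⟨h1, h2⟩
      exact hab (by rw [← h1, ← h2]; rfl)
  rw [hS, Matrix.mul_sum, Matrix.sum_mul]
  refine Finset.sum_congr rfl fun i _ => ?_
  ext a b
  rw [Matrix.mul_apply, Finset.sum_eq_single (Fin.castLE hn i)]
  · rw [Matrix.mul_single_apply_same]
    simp [vecMulVec_apply]
    ring
  · intro c _ hc
    rw [Matrix.mul_single_apply_of_ne _ _ _ _ _ hc, zero_mul]
  · simp

theorem unitary_of_orthonormal {m : ℕ} (x : Fin m → Fin m → ℂ)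
    (h : ∀ i j, star (x i) ⬝ᵥ x j = if i = j then 1 else 0) :
    ((Matrix.of x)ᵀ)ᴴ * (Matrix.of x)ᵀ = 1 := by
  ext i j
  rw [Matrix.one_apply, ← h i j]
  rfl

/-- A polynomial of the dilation of `W * rectDiag s * Vᴴ`: the even part of `p` gives the diagonal
blocks and the odd part the off-diagonal ones. -/
theorem aeval_dilation {m n : ℕ} (W : Matrix (Fin m) (Fin m) ℂ) (V : Matrix (Fin n) (Fin n) ℂ)
    (hW : Wᴴ * W = 1) (hV : Vᴴ * V = 1) (s : ℕ → ℂ) (hs : ∀ i, min n m ≤ i → s i = 0)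
    (p : Polynomial ℂ) :
    Polynomial.aeval (Matrix.fromBlocks 0 (W * rectDiag m n s * Vᴴ)
        (V * rectDiag n m s * Wᴴ) 0) p =
      Matrix.fromBlocks
        (W * rectDiag m m (fun i => (p.eval (s i) + p.eval (-s i)) / 2) * Wᴴ)
        (W * rectDiag m n (fun i => (p.eval (s i) - p.eval (-s i)) / 2) * Vᴴ)
        (V * rectDiag n m (fun i => (p.eval (s i) - p.eval (-s i)) / 2) * Wᴴ)
        (V * rectDiag n n (fun i => (p.eval (s i) + p.eval (-s i)) / 2) * Vᴴ) := by
  have hsm : ∀ i, m ≤ i → s i = 0 := fun i hi => hs i ((min_le_right _ _).trans hi)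
  have hsn : ∀ i, n ≤ i → s i = 0 := fun i hi => hs i ((min_le_left _ _).trans hi)
  induction p using Polynomial.induction_on with
  | C a =>
    simp only [Polynomial.aeval_C, Polynomial.eval_C, sub_self, zero_div, add_self_div_two,
      sandwich_zero, sandwich_const _ hW, sandwich_const _ hV, Algebra.algebraMap_eq_smul_one]
    rw [← Matrix.fromBlocks_one, Matrix.fromBlocks_smul]
    simp
  | add p q hp hq =>
    rw [map_add, hp, hq, Matrix.fromBlocks_add]
    simp only [sandwich_add, Polynomial.eval_add]
    congr 4 <;> (funext i; ring)
  | monomial k a ih =>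
    rw [pow_succ, ← mul_assoc, map_mul, ih, Polynomial.aeval_X, Matrix.fromBlocks_multiply]
    simp only [Matrix.mul_zero, zero_add, add_zero]
    -- the inner dimension of each product is `m` or `n`, beyond which `s` vanishes
    rw [sandwich_mul W V W hV _ _ (fun i hi => by rw [hsn i hi, mul_zero]),
      sandwich_mul W W V hW _ _ (fun i hi => by rw [hsm i hi, mul_zero]),
      sandwich_mul V V W hV _ _ (fun i hi => by rw [hsn i hi, mul_zero]),
      sandwich_mul V W V hW _ _ (fun i hi => by rw [hsm i hi, mul_zero])]
    simp only [Polynomial.eval_mul, Polynomial.eval_X]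
    congr 4 <;> (funext i; ring)

theorem eval_neg_of_even (p : Polynomial ℂ) (h : ∀ j, j % 2 = 1 → p.coeff j = 0) (z : ℂ) :
    p.eval (-z) = p.eval z := by
  rw [Polynomial.eval_eq_sum_range, Polynomial.eval_eq_sum_range]
  refine Finset.sum_congr rfl fun j _ => ?_
  rcases Nat.mod_two_eq_zero_or_one j with hj | hj
  · rw [(Nat.even_iff.mpr hj).neg_pow]
  · rw [h j hj, zero_mul, zero_mul]

theorem eval_neg_of_odd (p : Polynomial ℂ) (h : ∀ j, j % 2 = 0 → p.coeff j = 0) (z : ℂ) :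
    p.eval (-z) = -p.eval z := by
  rw [Polynomial.eval_eq_sum_range, Polynomial.eval_eq_sum_range, ← Finset.sum_neg_distrib]
  refine Finset.sum_congr rfl fun j _ => ?_
  rcases Nat.mod_two_eq_zero_or_one j with hj | hj
  · rw [h j hj, zero_mul, zero_mul, neg_zero]
  · rw [(Nat.odd_iff.mpr hj).neg_pow, mul_neg]

theorem poly_of_hermitian_dilation (dt d : ℕ) (A : Matrix (Fin dt) (Fin d) ℂ)
    (w : Fin dt → Fin dt → ℂ) (v : Fin d → Fin d → ℂ)
    (hONw : ∀ i j, star (w i) ⬝ᵥ w j = if i = j then 1 else 0)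
    (hONv : ∀ i j, star (v i) ⬝ᵥ v j = if i = j then 1 else 0)
    (ς : ℕ → ℝ) (hςnn : ∀ i, 0 ≤ ς i) (hς0 : ∀ i, min d dt ≤ i → ς i = 0)
    (hSVD : A = ∑ i : Fin (min d dt),
      ((ς i.val : ℝ) : ℂ) • vecMulVec (w (Fin.castLE (min_le_right d dt) i))
        (star (v (Fin.castLE (min_le_left d dt) i)))) :
    (∀ p : Polynomial ℂ, (∀ j, j % 2 = 1 → p.coeff j = 0) →
      Polynomial.aeval (Matrix.fromBlocks 0 A Aᴴ 0) p =
        Matrix.fromBlocks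
          (∑ i : Fin dt, p.eval ((ς i.val : ℝ) : ℂ) • vecMulVec (w i) (star (w i))) 0 0
          (∑ i : Fin d, p.eval ((ς i.val : ℝ) : ℂ) • vecMulVec (v i) (star (v i)))) ∧
    (∀ p : Polynomial ℂ, (∀ j, j % 2 = 0 → p.coeff j = 0) →
      Polynomial.aeval (Matrix.fromBlocks 0 A Aᴴ 0) p =
        Matrix.fromBlocks 0
          (∑ i : Fin (min d dt), p.eval ((ς i.val : ℝ) : ℂ) •
            vecMulVec (w (Fin.castLE (min_le_right d dt) i))
              (star (v (Fin.castLE (min_le_left d dt) i))))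
          (∑ i : Fin (min d dt), p.eval ((ς i.val : ℝ) : ℂ) •
            vecMulVec (v (Fin.castLE (min_le_left d dt) i))
              (star (w (Fin.castLE (min_le_right d dt) i)))) 0) := by
  have hW := unitary_of_orthonormal w hONw
  have hV := unitary_of_orthonormal v hONv
  have hs : ∀ i, min d dt ≤ i → ((ς i : ℝ) : ℂ) = 0 := fun i hi => by rw [hς0 i hi]; simp
  have hA : A = (Matrix.of w)ᵀ * rectDiag dt d (fun i => ((ς i : ℝ) : ℂ)) * ((Matrix.of v)ᵀ)ᴴ := by
    rw [hSVD, sandwich_eq_sum (min d dt) (min_le_right _ _) (min_le_left _ _) w v _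
      (fun i hi _ _ => hs i hi)]
  have hAH : Aᴴ
      = (Matrix.of v)ᵀ * rectDiag d dt (fun i => ((ς i : ℝ) : ℂ)) * ((Matrix.of w)ᵀ)ᴴ := by
    -- the singular values are real, so conjugation leaves the diagonal factor unchanged
    have hD : (rectDiag dt d (fun i => ((ς i : ℝ) : ℂ)))ᴴ
        = rectDiag d dt (fun i => ((ς i : ℝ) : ℂ)) := by
      ext i j
      simp only [rectDiag, Matrix.conjTranspose_apply, Matrix.of_apply]
      by_cases hij : i.val = j.val
      · simp [hij]
      · simp [hij, Ne.symm hij]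
    rw [hA, Matrix.conjTranspose_mul, Matrix.conjTranspose_mul, hD,
      Matrix.conjTranspose_conjTranspose, Matrix.mul_assoc]
  rw [hAH, hA]
  refine ⟨fun p hp => ?_, fun p hp => ?_⟩
  · rw [aeval_dilation _ _ hW hV _ hs]
    simp only [eval_neg_of_even p hp, sub_self, zero_div, add_self_div_two, sandwich_zero]
    rw [sandwich_eq_sum dt le_rfl le_rfl w w _ (fun i h1 h2 _ => absurd h2 (not_lt.mpr h1)),
      sandwich_eq_sum d le_rfl le_rfl v v _ (fun i h1 h2 _ => absurd h2 (not_lt.mpr h1))]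
    rfl
  · rw [aeval_dilation _ _ hW hV _ hs]
    simp only [eval_neg_of_odd p hp, add_neg_cancel, sub_neg_eq_add, zero_div, add_self_div_two,
      sandwich_zero]
    rw [sandwich_eq_sum (min d dt) (min_le_right _ _) (min_le_left _ _) w v _
        (fun i h1 h2 h3 => absurd (lt_min h3 h2) (not_lt.mpr h1)),
      sandwich_eq_sum (min d dt) (min_le_left _ _) (min_le_right _ _) v w _
        (fun i h1 h2 h3 => absurd (lt_min h2 h3) (not_lt.mpr h1))]
end

section
/- (Robust oblivious amplitude amplification.) Let n be an odd positive integer, ε ≥ 0, U a unitary N×N complex matrix, Π̃ and Π orthogonal projections, and W an N×N complex matrix with Π̃WΠ = W and W†W = Π (so W restricts to an isometry from the image of Π into the image of Π̃). Assume that ‖ sin(π/(2n))·Wψ − Π̃Uψ ‖ ≤ ε for every unit vector ψ with Πψ = ψ. Then there exist Φ ∈ ℝ^n and a sign c ∈ {+1, −1} such that for every unit vector ψ with Πψ = ψ, ‖ Wψ − c·Π̃ U_Φ ψ ‖ ≤ 2nε. -/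
/-!
The idea is that the amplification acts on an (approximately) two-dimensional space. Write
`n = 2m + 1`, `s = π / (2n)`, `δ = sin s`. For `ψ` in the image of `Π` put `w = Wψ` and `v = U†w`.
If `ε = 0`, then `U†(2Π̃ - 1)U` and `2Π - 1` act on the span of `ψ` and `v` as the reflections about
`v` and `ψ`, where `⟪ψ, v⟫ = δ`, so `G = (2Π - 1)U†(2Π̃ - 1)U` satisfies
`(-G)^k ψ = α k • ψ + β k • v` with `α k = cos ((2k+1)s) / cos s` and `β k = sin (2ks) / cos s`.
At `k = m` this vector is `v`, and `Π̃Uv = w`.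

For general `ε`, each reflection adds an error of at most `2ε` times a coefficient, which is at
most `1 / cos s` in absolute value. The reflections are contractions, so these errors only add up:
the total is at most `4mε / cos s = 2(n-1)ε / cos s`, and this is at most `2nε` because
`cos s ≥ 1 - s²/2 ≥ 1 - 1/n`. The estimate for the reflection about `ψ` needs the hypothesis for the
adjoint operators; it is `norm_adjoint_approx` below. The case `n = 1`, where `cos s = 0`, is the
hypothesis itself.

Taking `φ₁ = 0` and all other phases equal to `π/2` turns `Π̃U_Φ` into `Π̃U(-G)^m`, so `c = 1` works.
-/

open Matrix

/-! ### Reflections and the approximate rotation on a Hilbert space -/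

section Abstract

variable {E : Type*} [NormedAddCommGroup E] [InnerProductSpace ℂ E] [CompleteSpace E]

open ContinuousLinearMap

theorem norm_reflection_le (P : E →L[ℂ] E) (hP : adjoint P = P) (hPP : P * P = P) (x : E) :
    ‖(2 * P - 1) x‖ ≤ ‖x‖ := by
  have hR : (adjoint (2 * P - 1)) * (2 * P - 1) = 1 := by
    have h2 : adjoint (2 * P - 1) = 2 * P - 1 := by
      rw [two_mul, map_sub, map_add, hP]
      congr 1
      exact star_one (E →L[ℂ] E)
    rw [h2]
    have : (2 * P - 1) * (2 * P - 1) = 4 * (P * P) - 4 * P + 1 := by noncomm_ring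
    rw [this, hPP]; simp
  have h := apply_norm_sq_eq_inner_adjoint_left (2 * P - 1) x
  rw [show (adjoint (2 * P - 1)) ∘L (2 * P - 1) = 1 from hR] at h
  rw [one_apply_eq_self, inner_self_eq_norm_sq] at h
  exact le_of_eq ((sq_eq_sq₀ (norm_nonneg _) (norm_nonneg _)).1 h)

theorem norm_apply_of_adjoint_mul_self (U : E →L[ℂ] E) (hU : adjoint U * U = 1) (x : E) : ‖U x‖ = ‖x‖ := by
  have h := apply_norm_sq_eq_inner_adjoint_left U x
  rw [show (adjoint U) ∘L U = 1 from hU, one_apply_eq_self, inner_self_eq_norm_sq] at h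
  exact (sq_eq_sq₀ (norm_nonneg _) (norm_nonneg _)).1 h

/-- The adjoint of the approximation hypothesis: `ΠU†Π̃` is within `ε` of `δW†` on the image of
`W`. -/
theorem norm_adjoint_approx (U P Q W : E →L[ℂ] E) (δ ε : ℝ)
    (hP : adjoint P = P) (hPP : P * P = P) (hQ : adjoint Q = Q)
    (hQW : Q * W = W) (hWW : adjoint W * W = P)
    (happ : ∀ y, P y = y → ‖(δ : ℂ) • W y - Q (U y)‖ ≤ ε * ‖y‖)
    (ψ : E) (hψ : P ψ = ψ) (hw : ‖W ψ‖ = 1) :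
    ‖P (adjoint U (W ψ)) - (δ : ℂ) • ψ‖ ≤ ε := by
  set y := P (adjoint U (W ψ)) - (δ : ℂ) • ψ with hy
  have hPy : P y = y := by
    have : P (P (adjoint U (W ψ))) = P (adjoint U (W ψ)) := congrArg (· (adjoint U (W ψ))) hPP
    rw [hy, map_sub, map_smul, this, hψ]
  have hWψ : adjoint W (W ψ) = ψ := (congrArg (· ψ) hWW).trans hψ
  have hQWψ : Q (W ψ) = W ψ := congrArg (· ψ) hQW
  have key : inner ℂ y y = inner ℂ (Q (U y) - (δ : ℂ) • W y) (W ψ) := by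
    conv_lhs => arg 3; rw [hy]
    rw [inner_sub_right]
    have e1 : inner ℂ y (P (adjoint U (W ψ))) = inner ℂ (Q (U y)) (W ψ) := by
      conv_lhs => rw [← hP, adjoint_inner_right, hPy, adjoint_inner_right]
      conv_rhs => rw [← hQ, adjoint_inner_left, hQWψ]
    have e2 : inner ℂ y ((δ : ℂ) • ψ) = inner ℂ ((δ : ℂ) • W y) (W ψ) := by
      conv_lhs => rw [← hWψ, inner_smul_right, adjoint_inner_right]
      rw [inner_smul_left, Complex.conj_ofReal]
    rw [e1, e2, ← inner_sub_left]
  have h1 : ‖y‖ * ‖y‖ ≤ ε * ‖y‖ := by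
    have h2 := norm_inner_le_norm (𝕜 := ℂ) (Q (U y) - (δ : ℂ) • W y) (W ψ)
    rw [← key, hw, mul_one, norm_sub_rev] at h2
    have h3 : ‖inner ℂ y y‖ = ‖y‖ * ‖y‖ := by
      rw [inner_self_eq_norm_sq_to_K]
      simp [sq]
    rw [← h3]
    exact h2.trans (happ y hPy)
  rcases (norm_nonneg y).eq_or_lt with h0 | h0
  · rw [← h0]
    have h2 := happ ψ hψ
    have hψ0 : ‖ψ‖ ≠ 0 := by
      intro h
      rw [norm_eq_zero.1 h] at hw
      simp at hw
    exact nonneg_of_mul_nonneg_left ((norm_nonneg _).trans h2)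
      (lt_of_le_of_ne (norm_nonneg _) hψ0.symm)
  · exact le_of_mul_le_mul_right h1 h0

/-- The iterates of `-G` on `ψ` follow the exact rotation by the angle `2s` in the plane of `ψ` and
`v = U†Wψ`, up to an error that grows linearly. -/
theorem norm_iterate_approx (U P Q W : E →L[ℂ] E) (s ε : ℝ)
    (hU : adjoint U * U = 1) (hU' : U * adjoint U = 1)
    (hP : adjoint P = P) (hPP : P * P = P) (hQ : adjoint Q = Q) (hQQ : Q * Q = Q)
    (hQW : Q * W = W) (hWW : adjoint W * W = P)
    (happ : ∀ y, P y = y → ‖(Real.sin s : ℂ) • W y - Q (U y)‖ ≤ ε * ‖y‖)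
    (hs : 0 < Real.cos s)
    (ψ : E) (hψ : P ψ = ψ) (hψ1 : ‖ψ‖ = 1) (hw : ‖W ψ‖ = 1) (k : ℕ) :
    ‖((-((2 * P - 1) * adjoint U * (2 * Q - 1) * U)) ^ k) ψ -
      (((Real.cos ((2 * k + 1) * s) / Real.cos s : ℝ) : ℂ) • ψ +
        ((Real.sin (2 * k * s) / Real.cos s : ℝ) : ℂ) • adjoint U (W ψ))‖
      ≤ k * (4 * ε / Real.cos s) := by
  have hε : 0 ≤ ε := by
    have := (norm_nonneg _).trans (happ ψ hψ)
    rwa [hψ1, mul_one] at this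
  have hadj := norm_adjoint_approx U P Q W (Real.sin s) ε hP hPP hQ hQW hWW happ ψ hψ hw
  have hUv : U (adjoint U (W ψ)) = W ψ := congrArg (· (W ψ)) hU'
  have hUUψ : adjoint U (U ψ) = ψ := congrArg (· ψ) hU
  have hQWψ : Q (W ψ) = W ψ := congrArg (· ψ) hQW
  have hUn : ∀ x, ‖U x‖ = ‖x‖ := norm_apply_of_adjoint_mul_self U hU
  have hUn' : ∀ x, ‖adjoint U x‖ = ‖x‖ :=
    norm_apply_of_adjoint_mul_self (adjoint U) (by rw [adjoint_adjoint]; exact hU')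
  have hRP := norm_reflection_le P hP hPP
  have hRQ := norm_reflection_le Q hQ hQQ
  set v := adjoint U (W ψ) with hv
  set δ := Real.sin s with hδ
  set e := Q (U ψ) - (δ : ℂ) • W ψ with he
  set f := P v - (δ : ℂ) • ψ with hf
  have hen : ‖e‖ ≤ ε := by
    have := happ ψ hψ
    rwa [hψ1, mul_one, norm_sub_rev] at this
  have hQUψ : Q (U ψ) = (δ : ℂ) • W ψ + e := by rw [he]; abel
  have hPv : P v = (δ : ℂ) • ψ + f := by rw [hf]; abel
  set G := (2 * P - 1) * adjoint U * (2 * Q - 1) * U with hG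
  have hGapp : ∀ x, G x = (2 * P - 1) (adjoint U ((2 * Q - 1) (U x))) := fun x => rfl
  have refl_apply : ∀ (T : E →L[ℂ] E) (x : E), (2 * T - 1) x = (2 : ℂ) • T x - x := by
    intro T x
    rw [two_mul, two_smul]; rfl
  have hGn : ∀ x, ‖G x‖ ≤ ‖x‖ := fun x => by
    rw [hGapp]
    exact (hRP _).trans ((hUn' _).trans_le ((hRQ _).trans (hUn x).le))
  -- One step of `-G` on the span of `ψ` and `v`, with its two error terms.
  have step : ∀ a b : ℂ, (-G) (a • ψ + b • v) =
      (a - 2 * δ * (b + 2 * δ * a)) • ψ + (b + 2 * δ * a) • v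
        - ((2 * P - 1) ((2 * a) • adjoint U e) + (2 * (b + 2 * δ * a)) • f) := by
    intro a b
    have h1 : adjoint U ((2 * Q - 1) (U (a • ψ + b • v)))
        = (2 * a) • adjoint U e + ((b + 2 * δ * a) • v - a • ψ) := by
      rw [refl_apply, map_add, map_smul, map_smul, hUv]
      simp only [map_add, map_sub, map_smul, hQUψ, hQWψ, hUUψ, ← hv]
      module
    have h2 : (2 * P - 1) ((b + 2 * δ * a) • v - a • ψ)
        = (2 * δ * (b + 2 * δ * a) - a) • ψ - (b + 2 * δ * a) • v + (2 * (b + 2 * δ * a)) • f := by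
      rw [refl_apply]
      simp only [map_sub, map_smul, hPv, hψ]
      module
    rw [_root_.neg_apply, hGapp, h1, map_add, h2]
    module
  induction k with
  | zero => simp [hs.ne']
  | succ k ih =>
    set α := Real.cos ((2 * k + 1) * s) / Real.cos s with hα
    set β := Real.sin (2 * k * s) / Real.cos s with hβ
    have hβ' : Real.sin (2 * ((k + 1 : ℕ) : ℝ) * s) / Real.cos s = β + 2 * δ * α := by
      have e1 : 2 * ((k + 1 : ℕ) : ℝ) * s = (2 * k + 1) * s + s := by push_cast; ring
      have e2 : 2 * (k : ℝ) * s = (2 * k + 1) * s - s := by ring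
      rw [hβ, hα, hδ, e1, e2, Real.sin_add, Real.sin_sub]
      ring
    have hα' : Real.cos ((2 * ((k + 1 : ℕ) : ℝ) + 1) * s) / Real.cos s
        = α - 2 * δ * (β + 2 * δ * α) := by
      have e1 : (2 * ((k + 1 : ℕ) : ℝ) + 1) * s = 2 * ((k + 1 : ℕ) : ℝ) * s + s := by ring
      have e2 : (2 * (k : ℝ) + 1) * s = 2 * ((k + 1 : ℕ) : ℝ) * s - s := by push_cast; ring
      rw [← hβ', hα, hδ, e1, e2, Real.cos_add, Real.cos_sub]
      ring
    have hαle : |α| ≤ 1 / Real.cos s := by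
      rw [hα, abs_div, abs_of_pos hs]
      gcongr
      exact Real.abs_cos_le_one _
    have hβle : |β + 2 * δ * α| ≤ 1 / Real.cos s := by
      rw [← hβ', abs_div, abs_of_pos hs]
      gcongr
      exact Real.abs_sin_le_one _
    rw [hα', hβ', pow_succ']
    have hst := step α β
    have hdecomp : ((-G) * (-G) ^ k) ψ -
        (((α - 2 * δ * (β + 2 * δ * α) : ℝ) : ℂ) • ψ + ((β + 2 * δ * α : ℝ) : ℂ) • v)
        = (-G) (((-G) ^ k) ψ - ((α : ℂ) • ψ + (β : ℂ) • v))
          - ((2 * P - 1) ((2 * (α : ℂ)) • adjoint U e)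
            + (2 * ((β + 2 * δ * α : ℝ) : ℂ)) • f) := by
      rw [map_sub (-G), hst, mul_apply_eq_comp]
      push_cast
      abel
    rw [hdecomp]
    have n1 : ‖(-G) (((-G) ^ k) ψ - ((α : ℂ) • ψ + (β : ℂ) • v))‖ ≤ k * (4 * ε / Real.cos s) := by
      rw [_root_.neg_apply, norm_neg]
      exact (hGn _).trans ih
    have n2 : ‖(2 * P - 1) ((2 * (α : ℂ)) • adjoint U e)‖ ≤ 2 * (1 / Real.cos s) * ε := by
      refine (hRP _).trans ?_
      rw [norm_smul, hUn', norm_mul, Complex.norm_real, Complex.norm_ofNat, Real.norm_eq_abs]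
      gcongr
    have n3 : ‖(2 * ((β + 2 * δ * α : ℝ) : ℂ)) • f‖ ≤ 2 * (1 / Real.cos s) * ε := by
      rw [norm_smul, norm_mul, Complex.norm_real, Complex.norm_ofNat, Real.norm_eq_abs]
      gcongr
    refine (norm_sub_le _ _).trans ((add_le_add n1 ((norm_add_le _ _).trans
      (add_le_add n2 n3))).trans (le_of_eq ?_))
    push_cast
    ring

/-- Robust amplification for operators on a complex Hilbert space, with the phase sequence written
as the iterate `(-G)^m`. -/
theorem abstract_amplification (U P Q W : E →L[ℂ] E) (n m : ℕ) (hnm : n = 2 * m + 1) (ε : ℝ)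
    (hU : adjoint U * U = 1) (hU' : U * adjoint U = 1)
    (hP : adjoint P = P) (hPP : P * P = P) (hQ : adjoint Q = Q) (hQQ : Q * Q = Q)
    (hQW : Q * W = W) (hWW : adjoint W * W = P)
    (happ : ∀ y, ‖y‖ = 1 → P y = y →
      ‖(Real.sin (Real.pi / (2 * n)) : ℂ) • W y - Q (U y)‖ ≤ ε)
    (ψ : E) (hψ : P ψ = ψ) (hψ1 : ‖ψ‖ = 1) :
    ‖W ψ - (Q * U * (-((2 * P - 1) * adjoint U * (2 * Q - 1) * U)) ^ m) ψ‖ ≤ 2 * n * ε := by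
  have hε : 0 ≤ ε := (norm_nonneg _).trans (happ ψ hψ1 hψ)
  rcases Nat.eq_zero_or_pos m with rfl | hm
  · subst hnm
    have h := happ ψ hψ1 hψ
    norm_num at h
    simp only [pow_zero, mul_one, mul_zero, zero_add, Nat.cast_one, mul_apply_eq_comp]
    linarith
  set s := Real.pi / (2 * n) with hsdef
  have hn3 : (3 : ℝ) ≤ n := by rw [hnm]; exact_mod_cast (by omega : 3 ≤ 2 * m + 1)
  have hn0 : (0 : ℝ) < n := by linarith
  have hns : (n : ℝ) * s = Real.pi / 2 := by rw [hsdef]; field_simp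
  have hcos : (n : ℝ) - 1 ≤ n * Real.cos s := by
    have h1 := Real.one_sub_sq_div_two_le_cos (x := s)
    have h2 : (n : ℝ) * s ^ 2 ≤ 2 := by
      have h4 : (n : ℝ) * (n * s ^ 2) = (Real.pi / 2) ^ 2 := by rw [← hns]; ring
      have h5 : (Real.pi / 2) ^ 2 ≤ 4 := by nlinarith [Real.pi_le_four, Real.pi_pos]
      nlinarith [mul_nonneg hn0.le (sq_nonneg s)]
    nlinarith
  have hs : 0 < Real.cos s := by
    by_contra! h
    nlinarith
  -- The hypothesis on unit vectors extends to all of the image of `P` by scaling.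
  have happ' : ∀ y, P y = y → ‖(Real.sin s : ℂ) • W y - Q (U y)‖ ≤ ε * ‖y‖ := by
    intro y hy
    rcases eq_or_ne y 0 with rfl | h0
    · simp
    have hy0 : ‖y‖ ≠ 0 := norm_ne_zero_iff.2 h0
    have h := happ (((‖y‖⁻¹ : ℝ) : ℂ) • y)
      (by rw [norm_smul, Complex.norm_real, norm_inv, norm_norm, inv_mul_cancel₀ hy0])
      (by rw [map_smul, hy])
    rw [map_smul, map_smul, map_smul, smul_comm, ← smul_sub, norm_smul, Complex.norm_real,
      norm_inv, norm_norm, inv_mul_le_iff₀ (by positivity)] at h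
    linarith
  have hWn : ‖W ψ‖ = 1 := by
    have h := apply_norm_sq_eq_inner_adjoint_left W ψ
    rw [show (adjoint W) ∘L W = P from hWW, hψ, inner_self_eq_norm_sq, hψ1] at h
    exact ((sq_eq_sq₀ (norm_nonneg _) zero_le_one).1 h)
  have hQn : ∀ x, ‖Q x‖ ≤ ‖x‖ := fun x => by
    have h1 : (2 : ℂ) • Q x = (2 * Q - 1) x + x := by
      rw [two_mul, two_smul]; simp
    have h2 := norm_reflection_le Q hQ hQQ x
    have h3 := norm_add_le ((2 * Q - 1) x) x
    rw [← h1, norm_smul, Complex.norm_ofNat] at h3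
    linarith
  have hUv : U (adjoint U (W ψ)) = W ψ := congrArg (· (W ψ)) hU'
  have hQWψ : Q (W ψ) = W ψ := congrArg (· ψ) hQW
  have key := norm_iterate_approx U P Q W s ε hU hU' hP hPP hQ hQQ hQW hWW happ' hs ψ hψ hψ1 hWn m
  have hm1 : (2 * (m : ℝ) + 1) * s = Real.pi / 2 := by rw [← hns, hnm]; push_cast; ring
  have hm2 : 2 * (m : ℝ) * s = Real.pi / 2 - s := by rw [← hm1]; ring
  rw [hm1, hm2, Real.cos_pi_div_two, Real.sin_pi_div_two_sub, div_self hs.ne', zero_div,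
    Complex.ofReal_zero, zero_smul, zero_add, Complex.ofReal_one, one_smul] at key
  set x := ((-((2 * P - 1) * adjoint U * (2 * Q - 1) * U)) ^ m) ψ with hx
  have hfin : W ψ - (Q * U * (-((2 * P - 1) * adjoint U * (2 * Q - 1) * U)) ^ m) ψ
      = -(Q (U (x - adjoint U (W ψ)))) := by
    rw [mul_apply_eq_comp, ← hx, mul_apply_eq_comp, map_sub, hUv, map_sub, hQWψ]
    abel
  rw [hfin, norm_neg]
  refine (hQn _).trans ((norm_apply_of_adjoint_mul_self U hU _).trans_le (key.trans ?_))
  have hmn : 4 * (m : ℝ) = 2 * (n - 1) := by rw [hnm]; push_cast; ring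
  rw [show (m : ℝ) * (4 * ε / Real.cos s) = (4 * m) * ε / Real.cos s by ring, hmn,
    div_le_iff₀ hs]
  nlinarith [mul_le_mul_of_nonneg_left hcos hε]

end Abstract

/-! ### Matrices and the alternating phase sequence -/

theorem evnorm_eq_norm {N : ℕ} (v : Fin N → ℂ) : evnorm v = ‖WithLp.toLp 2 v‖ := by
  rw [evnorm, EuclideanSpace.norm_eq]
  simp [Complex.normSq_eq_norm_sq]

theorem phaseOp_pi_div_two {N : ℕ} (Q : Matrix (Fin N) (Fin N) ℂ) :
    phaseOp Q (Real.pi / 2) = Complex.I • (2 * Q - 1) := by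
  have h1 : Complex.exp (Complex.I * ((Real.pi / 2 : ℝ) : ℂ)) = Complex.I := by
    rw [mul_comm]; push_cast; exact Complex.exp_pi_div_two_mul_I
  rw [phaseOp, Complex.exp_neg, h1, Complex.inv_I, two_mul]
  module

/-- With `φ₁ = 0` and all other phases `π/2`, each pair of phase operators contributes `i² = -1`
times a product of two reflections. -/
theorem altSeq_chebyshev {N : ℕ} (U Pr PrT : Matrix (Fin N) (Fin N) ℂ) (m : ℕ) :
    altSeq U Pr PrT (2 * m + 1) (fun j => if j = 1 then 0 else Real.pi / 2)
      = U * (-((2 * Pr - 1) * Uᴴ * (2 * PrT - 1) * U)) ^ m := by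
  have h0 : phaseOp PrT 0 = 1 := by simp [phaseOp]
  have hstep : phaseOp Pr (Real.pi / 2) * Uᴴ * phaseOp PrT (Real.pi / 2) * U
      = -((2 * Pr - 1) * Uᴴ * (2 * PrT - 1) * U) := by
    rw [phaseOp_pi_div_two, phaseOp_pi_div_two]
    simp only [smul_mul_assoc, mul_smul_comm, smul_smul, Complex.I_mul_I, neg_one_smul, neg_mul]
  have hodd : (2 * m + 1) % 2 = 1 := by omega
  have hhalf : (2 * m + 1 - 1) / 2 = m := by omega
  rw [altSeq, if_pos hodd, hhalf, if_pos rfl, h0, one_mul]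
  simp [hstep]

theorem robust_oblivious_amplitude_amplification
    (N n : ℕ) (hodd : Odd n) (hn : 0 < n) (ε : ℝ) (hε : 0 ≤ ε)
    (U Pr PrT W : Matrix (Fin N) (Fin N) ℂ)
    (hU : U ∈ Matrix.unitaryGroup (Fin N) ℂ)
    (hPrProj : Prᴴ = Pr ∧ Pr * Pr = Pr)
    (hPrTProj : PrTᴴ = PrT ∧ PrT * PrT = PrT)
    (hW1 : PrT * W * Pr = W) (hW2 : Wᴴ * W = Pr)
    (happrox : ∀ ψ : Fin N → ℂ, evnorm ψ = 1 → Pr.mulVec ψ = ψ →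
      evnorm (((Real.sin (Real.pi / (2 * n)) : ℝ) : ℂ) • W.mulVec ψ -
        (PrT * U).mulVec ψ) ≤ ε) :
    ∃ (Φ : ℕ → ℝ) (c : ℂ), (c = 1 ∨ c = -1) ∧
      ∀ ψ : Fin N → ℂ, evnorm ψ = 1 → Pr.mulVec ψ = ψ →
        evnorm (W.mulVec ψ - c • (PrT * altSeq U Pr PrT n Φ).mulVec ψ) ≤ 2 * n * ε := by
  obtain ⟨m, hm⟩ := hodd
  refine ⟨fun j => if j = 1 then 0 else Real.pi / 2, 1, Or.inl rfl, fun ψ hψ1 hψ => ?_⟩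
  let F := Matrix.toEuclideanCLM (n := Fin N) (𝕜 := ℂ)
  have hF : ∀ (A : Matrix (Fin N) (Fin N) ℂ) (x : Fin N → ℂ),
      F A (WithLp.toLp 2 x) = WithLp.toLp 2 (A.mulVec x) := fun A x => rfl
  have hFadj : ∀ A, ContinuousLinearMap.adjoint (F A) = F Aᴴ := fun A => (map_star F A).symm
  have hQW : PrT * W = W := by
    conv_lhs => rw [← hW1]
    rw [mul_assoc PrT W Pr, ← mul_assoc PrT PrT, hPrTProj.2, ← mul_assoc, hW1]
  have key := abstract_amplification (F U) (F Pr) (F PrT) (F W) n m hm ε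
    (by rw [hFadj, ← map_mul, ← map_one F]; exact congrArg F (Matrix.mem_unitaryGroup_iff'.1 hU))
    (by rw [hFadj, ← map_mul, ← map_one F]; exact congrArg F (Matrix.mem_unitaryGroup_iff.1 hU))
    (by rw [hFadj, hPrProj.1]) (by rw [← map_mul, hPrProj.2])
    (by rw [hFadj, hPrTProj.1]) (by rw [← map_mul, hPrTProj.2])
    (by rw [← map_mul, hQW]) (by rw [hFadj, ← map_mul, hW2])
    (fun y hy1 hy => by
      have h := happrox (WithLp.ofLp y) (by rw [evnorm_eq_norm]; exact hy1)
        (congrArg WithLp.ofLp hy)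
      rw [evnorm_eq_norm, ← Matrix.mulVec_mulVec] at h
      exact h)
    (WithLp.toLp 2 ψ) (by rw [hF, hψ]) (by rw [← evnorm_eq_norm]; exact hψ1)
  have hop : F PrT * F U * (-((2 * F Pr - 1) * ContinuousLinearMap.adjoint (F U)
      * (2 * F PrT - 1) * F U)) ^ m
      = F (PrT * altSeq U Pr PrT n (fun j => if j = 1 then 0 else Real.pi / 2)) := by
    rw [hm, altSeq_chebyshev, hFadj]
    simp only [map_mul, map_pow, map_neg, map_sub, map_one, map_ofNat, mul_assoc]
  rw [hop, hF, hF, ← WithLp.toLp_sub] at key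
  rw [evnorm_eq_norm, one_smul]
  exact key
end

section
/- For t > 0 and ε ∈ (0,1), let r = r(t,ε) be the unique real number in (t,∞) satisfying (t/r)^r = ε. Then: (i) for every q > 0, r < e^q·t + ln(1/ε)/q; (ii) if t ≥ ln(1/ε)/e, then r ≤ e·t; and (iii) if t ≤ ln(1/ε)/e, then ln(1/ε)/ln(e + ln(1/ε)/t) ≤ r ≤ 4·ln(1/ε)/ln(e + ln(1/ε)/t). Consequently r(t,ε) = Θ( t + ln(1/ε)/ln(e + ln(1/ε)/t) ). -/
/-!
Put `L = log (1 / ε)` and `y = log (r / t) > 0`. Then `r = t * exp y` and `L = r * y`, so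
`L / t = y * exp y`, and each bound becomes an elementary inequality in `y`.

* If `y ≤ q` then `r ≤ exp q * t`; if `y > q` then `r = L / y < L / q`.
* `L / t ≤ e` forces `y ≤ 1`, and `L / t ≥ e` forces `y ≥ 1`, as `y * exp y` is increasing.
* With `D = log (e + L / t)`, always `y ≤ D`, that is `exp y ≤ e + y * exp y`. For `y ≥ 1`, also
  `D ≤ 2 * y`, since `e + y * exp y ≤ (1 + y) * exp y ≤ exp (2 * y)`. As `r = L / y`, this
  compares `r` with `L / D`.
-/

/-- The parametrization by `y = log (r / t)`, which turns the defining equation of `r` into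
`log (1 / ε) = r * y`. -/
lemma exists_param {t ε r : ℝ} (ht : 0 < t) (hr : t < r) (h : (t / r) ^ r = ε) :
    ∃ y : ℝ, 0 < y ∧ r = t * Real.exp y ∧ Real.log (1 / ε) = r * y := by
  have hr0 : 0 < r := ht.trans hr
  refine ⟨Real.log (r / t), Real.log_pos ((one_lt_div ht).2 hr), ?_, ?_⟩
  · rw [Real.exp_log (by positivity)]
    field_simp
  · rw [← h, one_div, Real.log_inv, Real.log_rpow (by positivity),
      Real.log_div ht.ne' hr0.ne', Real.log_div hr0.ne' ht.ne']
    ring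

lemma le_log_e_add {y : ℝ} (hy : 0 < y) :
    y ≤ Real.log (Real.exp 1 + y * Real.exp y) := by
  rw [Real.le_log_iff_exp_le (by positivity)]
  rcases le_total y 1 with h | h
  · have h1 := Real.exp_le_exp.2 h
    have h2 : 0 < y * Real.exp y := by positivity
    linarith
  · nlinarith [Real.exp_pos y, Real.exp_pos 1]

lemma log_e_add_le {y : ℝ} (hy : 1 ≤ y) :
    Real.log (Real.exp 1 + y * Real.exp y) ≤ 2 * y := by
  have hy0 : 0 < y := by linarith
  rw [Real.log_le_iff_le_exp (by positivity), two_mul, Real.exp_add]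
  have h1 := Real.exp_le_exp.2 hy
  nlinarith [Real.exp_pos y, Real.add_one_le_exp y]

theorem bounds_on_r :
    ∃ c₁ c₂ : ℝ, 0 < c₁ ∧ 0 < c₂ ∧
      ∀ t ε r : ℝ, 0 < t → ε ∈ Set.Ioo (0 : ℝ) 1 → t < r → (t / r) ^ r = ε →
        ((∀ q : ℝ, 0 < q → r < Real.exp q * t + Real.log (1 / ε) / q) ∧
          (Real.log (1 / ε) / Real.exp 1 ≤ t → r ≤ Real.exp 1 * t) ∧
          (t ≤ Real.log (1 / ε) / Real.exp 1 →
            Real.log (1 / ε) / Real.log (Real.exp 1 + Real.log (1 / ε) / t) ≤ r ∧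
            r ≤ 4 * Real.log (1 / ε) / Real.log (Real.exp 1 + Real.log (1 / ε) / t)) ∧
          (c₁ * (t + Real.log (1 / ε) / Real.log (Real.exp 1 + Real.log (1 / ε) / t)) ≤ r ∧
            r ≤ c₂ * (t + Real.log (1 / ε) / Real.log (Real.exp 1 + Real.log (1 / ε) / t)))) := by
  refine ⟨1 / 2, 4, by norm_num, by norm_num, ?_⟩
  intro t ε r ht _ hr h
  obtain ⟨y, hy, hry, hL⟩ := exists_param ht hr h
  have hr0 : 0 < r := ht.trans hr
  have hLt : Real.log (1 / ε) / t = y * Real.exp y := by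
    rw [hL, hry]
    field_simp
  rw [hLt, hL]
  have hyD := le_log_e_add hy
  have hDy := @log_e_add_le y
  set D := Real.log (Real.exp 1 + y * Real.exp y)
  have hD : 0 < D := hy.trans_le hyD
  have hlow : r * y / D ≤ r := by
    rw [div_le_iff₀ hD]
    gcongr
  have hup : 1 ≤ y → r ≤ 2 * (r * y / D) := fun h1 => by
    rw [← mul_div_assoc, le_div_iff₀ hD]
    nlinarith [hDy h1]
  have hsmall : y ≤ 1 → r ≤ Real.exp 1 * t := fun h1 => by
    rw [hry, mul_comm]
    gcongr
  have hpos : 0 < r * y / D := by positivity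
  refine ⟨fun q hq => ?_, fun h1 => ?_, fun h1 => ⟨hlow, ?_⟩, ?_, ?_⟩
  · rcases le_or_gt y q with hyq | hyq
    · have h2 : r ≤ Real.exp q * t := by
        rw [hry, mul_comm]
        gcongr
      have h3 : 0 < r * y / q := by positivity
      linarith
    · have h2 : r < r * y / q := by
        rw [lt_div_iff₀ hq]
        gcongr
      have h3 : 0 < Real.exp q * t := by positivity
      linarith
  · apply hsmall
    by_contra! hc
    rw [div_le_iff₀ (Real.exp_pos 1), hry] at h1
    have h2 := Real.exp_lt_exp.2 hc
    have h3 : Real.exp 1 < Real.exp y * y := by nlinarith [Real.exp_pos y]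
    nlinarith
  · have hy1 : 1 ≤ y := by
      by_contra! hc
      rw [le_div_iff₀ (Real.exp_pos 1), hry] at h1
      have h2 := Real.exp_lt_exp.2 hc
      have h3 : Real.exp y * y < Real.exp 1 := by nlinarith [Real.exp_pos y]
      nlinarith
    have h2 := hup hy1
    rw [mul_div_assoc]
    linarith
  · linarith
  · rcases le_total y 1 with hy1 | hy1
    · have h2 := hsmall hy1
      have h3 := Real.exp_one_lt_d9
      nlinarith
    · linarith [hup hy1]
end
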